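/- arXiv:2407.06231 — 7 statements merged into one kernel-verified Lean document; each statement's English description precedes it below -/
import Mathlib

section
/- (Invariance of the variational derivative under moving frames.) Let g : ℝ × ℝⁿ → ℝⁿ be a moving reference frame, L : ℝⁿ × ℝⁿ × ℝ → ℝ a smooth Lagrangian, and define the Lagrangian in the moving frame by l(x, ẋ, t) := L(g_t(x), D g_t|_x(ẋ) + ω_t(g_t(x)), t). Let Γ(t) be a smooth curve and ξ(t) a smooth vector field along Γ, and set γ(t) := g_t(Γ(t)) and η(t) := D g_t|_{Γ(t)}(ξ(t)). Then the variational derivative of L along γ in the direction η equals the variational derivative of l along Γ in the direction ξ: δL(η)|_γ(t) = δl(ξ)|_Γ(t) for all t. -/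
open scoped ContDiff

/-- The angular velocity in the fixed frame. -/
noncomputable def omegaFixed {n : ℕ} (g ginv : ℝ → (Fin n → ℝ) → (Fin n → ℝ))
    (t : ℝ) (q : Fin n → ℝ) : Fin n → ℝ :=
  deriv (fun s => g (t + s) (ginv t q)) 0

/-- The variational derivative of a Lagrangian `L(q, q̇, t)` along a curve `γ` in the
direction of a vector field `η` along `γ`:
`δL(η)|_γ(t) = Σ_i (∂L/∂q^i − (d/dt)(∂L/∂q̇^i)) η^i(t)`, written invariantly. -/
noncomputable def varDeriv {n : ℕ} (L : (Fin n → ℝ) → (Fin n → ℝ) → ℝ → ℝ)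
    (γ η : ℝ → (Fin n → ℝ)) (t : ℝ) : ℝ :=
  fderiv ℝ (fun q => L q (deriv γ t) t) (γ t) (η t)
    - deriv (fun s => fderiv ℝ (fun v => L (γ s) v s) (deriv γ s) (η t)) t

/-- Invariance of the variational derivative under moving frames:
with `l(x,ẋ,t) := L(g_t(x), D g_t|_x(ẋ) + ω_t(g_t(x)), t)`, `γ(t) := g_t(Γ(t))` and
`η(t) := D g_t|_{Γ(t)}(ξ(t))`, one has `δL(η)|_γ(t) = δl(ξ)|_Γ(t)` for all `t`. -/
theorem variational_derivative_invariance {n : ℕ}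
    (g ginv : ℝ → (Fin n → ℝ) → (Fin n → ℝ))
    (hg : ContDiff ℝ ∞ (fun p : ℝ × (Fin n → ℝ) => g p.1 p.2))
    (hginv : ContDiff ℝ ∞ (fun p : ℝ × (Fin n → ℝ) => ginv p.1 p.2))
    (hleft : ∀ t x, ginv t (g t x) = x)
    (hright : ∀ t q, g t (ginv t q) = q)
    (L : (Fin n → ℝ) → (Fin n → ℝ) → ℝ → ℝ)
    (hL : ContDiff ℝ ∞ (fun p : (Fin n → ℝ) × (Fin n → ℝ) × ℝ => L p.1 p.2.1 p.2.2))
    (Γ ξ : ℝ → (Fin n → ℝ)) (hΓ : ContDiff ℝ ∞ Γ) (hξ : ContDiff ℝ ∞ ξ)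
    (t : ℝ) :
    varDeriv L (fun s => g s (Γ s)) (fun s => fderiv ℝ (g s) (Γ s) (ξ s)) t
      = varDeriv
          (fun x v τ => L (g τ x) (fderiv ℝ (g τ) x v + omegaFixed g ginv τ (g τ x)) τ)
          Γ ξ t := by
  set G : ℝ × (Fin n → ℝ) → (Fin n → ℝ) := fun p => g p.1 p.2 with hGdef
  set F : (Fin n → ℝ) × (Fin n → ℝ) × ℝ → ℝ := fun p => L p.1 p.2.1 p.2.2 with hFdef
  have hGd : Differentiable ℝ G := hg.differentiable (by simp)
  have hFd : Differentiable ℝ F := hL.differentiable (by simp)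
  have hΓd : Differentiable ℝ Γ := hΓ.differentiable (by simp)
  have hDG : Differentiable ℝ (fderiv ℝ G) :=
    (hg.fderiv_right (m := ∞) (by simp)).differentiable (by simp)
  have hDF : Differentiable ℝ (fderiv ℝ F) :=
    (hL.fderiv_right (m := ∞) (by simp)).differentiable (by simp)
  have hdΓ : Differentiable ℝ (deriv Γ) :=
    ((contDiff_infty_iff_deriv.1 hΓ).2).differentiable (by simp)
  -- partial derivatives of `g`
  have hgx : ∀ s x v, fderiv ℝ (g s) x v = fderiv ℝ G (s, x) (0, v) := by
    intro s x v
    have h : HasFDerivAt (g s) ((fderiv ℝ G (s, x)).comp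
        ((0 : (Fin n → ℝ) →L[ℝ] ℝ).prod (ContinuousLinearMap.id ℝ (Fin n → ℝ)))) x :=
      ((hGd (s, x)).hasFDerivAt).comp (f := fun y : Fin n → ℝ => (s, y)) x
        ((hasFDerivAt_const s x).prodMk (hasFDerivAt_id x))
    rw [h.fderiv]
    simp
  have hom : ∀ s x, omegaFixed g ginv s (g s x) = fderiv ℝ G (s, x) (1, 0) := by
    intro s x
    unfold omegaFixed
    rw [hleft]
    have h1 : HasDerivAt (fun r : ℝ => (s + r, x)) ((1 : ℝ), (0 : Fin n → ℝ)) 0 :=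
      ((hasDerivAt_id (0 : ℝ)).const_add s).prodMk (hasDerivAt_const (0 : ℝ) x)
    have h2 : HasFDerivAt G (fderiv ℝ G (s, x)) (s + 0, x) := by
      rw [add_zero]; exact (hGd (s, x)).hasFDerivAt
    exact (h2.comp_hasDerivAt (0 : ℝ) h1).deriv
  have hW : ∀ s x v, fderiv ℝ (g s) x v + omegaFixed g ginv s (g s x)
      = fderiv ℝ G (s, x) (1, v) := by
    intro s x v
    rw [hgx, hom, ← map_add]
    simp
  -- the curve `(s, Γ s)`
  have hc : ∀ s, HasDerivAt (fun r : ℝ => (r, Γ r)) ((1 : ℝ), deriv Γ s) s := fun s =>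
    (hasDerivAt_id s).prodMk (hΓd s).hasDerivAt
  have hγ : ∀ s, HasDerivAt (fun r => g r (Γ r)) (fderiv ℝ G (s, Γ s) (1, deriv Γ s)) s :=
    fun s => HasFDerivAt.comp_hasDerivAt (l := G) (f := fun r : ℝ => (r, Γ r)) s
      ((hGd (s, Γ s)).hasFDerivAt) (hc s)
  have hdγ : deriv (fun r => g r (Γ r)) = fun s => fderiv ℝ G (s, Γ s) (1, deriv Γ s) :=
    funext fun s => (hγ s).deriv
  -- the velocity derivative of `L`
  have hLv : ∀ q v s w, fderiv ℝ (fun v => L q v s) v w = fderiv ℝ F (q, v, s) (0, w, 0) := by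
    intro q v s w
    have h := ((hFd (q, v, s)).hasFDerivAt).comp (f := fun y : Fin n → ℝ => (q, y, s)) v
        ((hasFDerivAt_const q v).prodMk ((hasFDerivAt_id v).prodMk (hasFDerivAt_const s v)))
    have hfd : fderiv ℝ (fun v => L q v s) v = _ := h.fderiv
    rw [hfd]
    simp
  have hLq : ∀ q v s w, fderiv ℝ (fun q => L q v s) q w = fderiv ℝ F (q, v, s) (w, 0, 0) := by
    intro q v s w
    have h := ((hFd (q, v, s)).hasFDerivAt).comp (f := fun y : Fin n → ℝ => (y, v, s)) q
        ((hasFDerivAt_id q).prodMk ((hasFDerivAt_const v q).prodMk (hasFDerivAt_const s q)))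
    have hfd : fderiv ℝ (fun q => L q v s) q = _ := h.fderiv
    rw [hfd]
    simp
  -- derivatives of the transformed Lagrangian
  have hlv : ∀ x v s w, fderiv ℝ (fun v => L (g s x) (fderiv ℝ G (s, x) (1, v)) s) v w
      = fderiv ℝ F (g s x, fderiv ℝ G (s, x) (1, v), s) (0, fderiv ℝ G (s, x) (0, w), 0) := by
    intro x v s w
    have h1 : HasFDerivAt (fun v : Fin n → ℝ => fderiv ℝ G (s, x) ((1 : ℝ), v))
        ((fderiv ℝ G (s, x)).comp
          ((0 : (Fin n → ℝ) →L[ℝ] ℝ).prod (ContinuousLinearMap.id ℝ (Fin n → ℝ)))) v :=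
      (fderiv ℝ G (s, x)).hasFDerivAt.comp (f := fun y : Fin n → ℝ => ((1 : ℝ), y)) v
        ((hasFDerivAt_const (1 : ℝ) v).prodMk (hasFDerivAt_id v))
    have h := ((hFd (g s x, fderiv ℝ G (s, x) (1, v), s)).hasFDerivAt).comp
        (f := fun y : Fin n → ℝ => (g s x, fderiv ℝ G (s, x) (1, y), s)) v
        ((hasFDerivAt_const (g s x) v).prodMk (h1.prodMk (hasFDerivAt_const s v)))
    have hfd : fderiv ℝ (fun v => L (g s x) (fderiv ℝ G (s, x) (1, v)) s) v = _ := h.fderiv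
    rw [hfd]
    simp
  have hlx : ∀ x v s w, fderiv ℝ (fun x => L (g s x) (fderiv ℝ G (s, x) (1, v)) s) x w
      = fderiv ℝ F (g s x, fderiv ℝ G (s, x) (1, v), s)
          (fderiv ℝ G (s, x) (0, w), fderiv ℝ (fderiv ℝ G) (s, x) (0, w) (1, v), 0) := by
    intro x v s w
    have hi : HasFDerivAt (fun y : Fin n → ℝ => (s, y))
        ((0 : (Fin n → ℝ) →L[ℝ] ℝ).prod (ContinuousLinearMap.id ℝ (Fin n → ℝ))) x :=
      (hasFDerivAt_const s x).prodMk (hasFDerivAt_id x)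
    have h0 := ((hGd (s, x)).hasFDerivAt).comp (f := fun y : Fin n → ℝ => (s, y)) x hi
    have h1 := ((hDG (s, x)).hasFDerivAt).comp (f := fun y : Fin n → ℝ => (s, y)) x hi
    have h2 := h1.clm_apply (hasFDerivAt_const ((1 : ℝ), v) x)
    have h := ((hFd (g s x, fderiv ℝ G (s, x) (1, v), s)).hasFDerivAt).comp
        (f := fun y : Fin n → ℝ => (g s y, fderiv ℝ G (s, y) (1, v), s)) x
        (h0.prodMk (h2.prodMk (hasFDerivAt_const s x)))
    have hfd : fderiv ℝ (fun x => L (g s x) (fderiv ℝ G (s, x) (1, v)) s) x = _ := h.fderiv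
    rw [hfd]
    simp
  -- time derivatives
  have hDGc : HasDerivAt (fun s => fderiv ℝ G (s, Γ s))
      (fderiv ℝ (fderiv ℝ G) (t, Γ t) (1, deriv Γ t)) t :=
    ((hDG (t, Γ t)).hasFDerivAt).comp_hasDerivAt t (hc t)
  have hP : DifferentiableAt ℝ
      (fun s => fderiv ℝ F (g s (Γ s), fderiv ℝ G (s, Γ s) (1, deriv Γ s), s)) t := by
    have h1 : DifferentiableAt ℝ (fun s => fderiv ℝ G (s, Γ s) ((1 : ℝ), deriv Γ s)) t :=
      hDGc.differentiableAt.clm_apply ((differentiableAt_const _).prodMk (hdΓ t))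
    exact (hDF _).comp t ((hγ t).differentiableAt.prodMk (h1.prodMk differentiableAt_id))
  have hsymm : fderiv ℝ (fderiv ℝ G) (t, Γ t) (1, deriv Γ t) (0, ξ t)
      = fderiv ℝ (fderiv ℝ G) (t, Γ t) (0, ξ t) (1, deriv Γ t) :=
    (hg.contDiffAt.isSymmSndFDerivAt (by simpa using (WithTop.coe_le_coe.2 (le_top : (2 : ℕ∞) ≤ ⊤)))) _ _
  have hd1 := hP.hasDerivAt.clm_apply
    (hasDerivAt_const t ((0 : Fin n → ℝ), fderiv ℝ G (t, Γ t) (0, ξ t), (0 : ℝ)))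
  have hd2 := hP.hasDerivAt.clm_apply
    ((hasDerivAt_const t (0 : Fin n → ℝ)).prodMk
      ((hDGc.clm_apply (hasDerivAt_const t ((0 : ℝ), ξ t))).prodMk (hasDerivAt_const t (0 : ℝ))))
  unfold varDeriv
  simp only [hW]
  simp only [hdγ, hLv, hLq, hlv, hlx, hgx]
  rw [hd1.deriv, hd2.deriv]
  have hsplit : ∀ a b : Fin n → ℝ, ((a, b, (0 : ℝ)) : (Fin n → ℝ) × (Fin n → ℝ) × ℝ)
      = (a, 0, 0) + (0, b, 0) := by
    intro a b; simp
  rw [hsplit (fderiv ℝ G (t, Γ t) (0, ξ t)) (fderiv ℝ (fderiv ℝ G) (t, Γ t) (0, ξ t) (1, deriv Γ t)),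
    map_add, ← hsymm]
  simp
end

section
/- (Equivalence of nonholonomic dynamics in fixed and moving frames.) Let (ℝⁿ, L, F, 𝒜) be a nonholonomic Lagrangian system with smooth Lagrangian L, smooth force field F, and affine constraints defined by smooth functions a_{νi}(q,t), a_ν(q,t) (ν = 1,…,r, i = 1,…,n) with the matrix (a_{νi}) of rank r: 𝒜_t|_q = {ξ ∈ ℝⁿ : Σ_i a_{νi}(q,t)ξ^i + a_ν(q,t) = 0 for all ν}, 𝒟_t|_q = {η ∈ ℝⁿ : Σ_i a_{νi}(q,t)η^i = 0 for all ν}. Let g be a moving reference frame and define l(x,ẋ,t) := L(g_t(x), Dg_t(ẋ) + ω_t(g_t(x)), t), f(x,ẋ,t)(ξ) := F(g_t(x), Dg_t(ẋ) + ω_t(g_t(x)), t)(Dg_t(ξ)), 𝐃_t|_x := (Dg_t)^{-1}(𝒟_t|_{g_t(x)}), 𝐀_t|_x := (Dg_t)^{-1}(𝒜_t|_{g_t(x)}) − Ω_t(x). Then a curve γ is a motion of (ℝⁿ, L, F, 𝒜) — i.e. γ̇(t) ∈ 𝒜_t|_{γ(t)} and δL(η)|_γ + F(η)|_γ = 0 for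 all η(t) ∈ 𝒟_t|_{γ(t)} — if and only if Γ(t) := g_t^{-1}(γ(t)) is a motion of (ℝⁿ, l, f, 𝐀), i.e. Γ̇(t) ∈ 𝐀_t|_{Γ(t)} and δl(ξ)|_Γ + f(ξ)|_Γ = 0 for all ξ(t) ∈ 𝐃_t|_{Γ(t)}. -/
open scoped ContDiff

/-- Angular velocity in the moving frame. -/
noncomputable def omegaMoving {n : ℕ} (g ginv : ℝ → (Fin n → ℝ) → (Fin n → ℝ))
    (t : ℝ) (x : Fin n → ℝ) : Fin n → ℝ :=
  deriv (fun s => ginv t (g (t + s) x)) 0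

/-- Membership in the affine constraint space `𝒜_t|_q`:
`Σ_i a_{νi}(q,t) ξ^i + a_ν(q,t) = 0` for all `ν`. -/
def inAffineConstraint {n r : ℕ} (a : Fin r → Fin n → (Fin n → ℝ) → ℝ → ℝ)
    (a0 : Fin r → (Fin n → ℝ) → ℝ → ℝ) (t : ℝ) (q ξ : Fin n → ℝ) : Prop :=
  ∀ ν, (∑ i, a ν i q t * ξ i) + a0 ν q t = 0

/-- Membership in the space of virtual displacements `𝒟_t|_q`:
`Σ_i a_{νi}(q,t) η^i = 0` for all `ν`. -/
def inVirtual {n r : ℕ} (a : Fin r → Fin n → (Fin n → ℝ) → ℝ → ℝ)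
    (t : ℝ) (q η : Fin n → ℝ) : Prop :=
  ∀ ν, (∑ i, a ν i q t * η i) = 0

/-- The variational derivative `δL(η)|_γ(t)` of `L` along `γ` in the direction of a fixed
vector `η`. -/
noncomputable def varDerivPt {n : ℕ} (L : (Fin n → ℝ) → (Fin n → ℝ) → ℝ → ℝ)
    (γ : ℝ → (Fin n → ℝ)) (η : Fin n → ℝ) (t : ℝ) : ℝ :=
  fderiv ℝ (fun q => L q (deriv γ t) t) (γ t) η
    - deriv (fun s => fderiv ℝ (fun v => L (γ s) v s) (deriv γ s) η) t

/-- `γ` is a motion of the nonholonomic system `(ℝⁿ, L, F, 𝒜)`: it is admissible,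
`γ̇(t) ∈ 𝒜_t|_{γ(t)}`, and `δL(η)|_γ + F(η)|_γ = 0` for all virtual displacements
`η ∈ 𝒟_t|_{γ(t)}`. -/
def IsNonholonomicMotion {n r : ℕ} (L : (Fin n → ℝ) → (Fin n → ℝ) → ℝ → ℝ)
    (F : (Fin n → ℝ) → (Fin n → ℝ) → ℝ → ((Fin n → ℝ) →L[ℝ] ℝ))
    (a : Fin r → Fin n → (Fin n → ℝ) → ℝ → ℝ)
    (a0 : Fin r → (Fin n → ℝ) → ℝ → ℝ) (γ : ℝ → (Fin n → ℝ)) : Prop :=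
  (∀ t, inAffineConstraint a a0 t (γ t) (deriv γ t)) ∧
  (∀ t, ∀ η : Fin n → ℝ, inVirtual a t (γ t) η →
    varDerivPt L γ η t + F (γ t) (deriv γ t) t η = 0)

theorem aux_fderiv_g {n : ℕ} {g : ℝ → (Fin n → ℝ) → (Fin n → ℝ)}
    (hg : ContDiff ℝ ∞ (fun p : ℝ × (Fin n → ℝ) => g p.1 p.2)) (t : ℝ) (x v : Fin n → ℝ) :
    fderiv ℝ (g t) x v = fderiv ℝ (fun p : ℝ × (Fin n → ℝ) => g p.1 p.2) (t, x) (0, v) := by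
  have h1 : HasFDerivAt (fun p : ℝ × (Fin n → ℝ) => g p.1 p.2) _ (t, x) :=
    (hg.differentiable (by simp) (t, x)).hasFDerivAt
  have h2 : HasFDerivAt (g t) _ x := h1.comp x (hasFDerivAt_prodMk_right t x)
  rw [h2.fderiv]
  simp

theorem aux_curve {n : ℕ} {g : ℝ → (Fin n → ℝ) → (Fin n → ℝ)}
    (hg : ContDiff ℝ ∞ (fun p : ℝ × (Fin n → ℝ) => g p.1 p.2)) (t : ℝ)
    {Γ : ℝ → (Fin n → ℝ)} {v : Fin n → ℝ} (hΓ : HasDerivAt Γ v t) :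
    HasDerivAt (fun s => g s (Γ s))
      (fderiv ℝ (fun p : ℝ × (Fin n → ℝ) => g p.1 p.2) (t, Γ t) (1, v)) t := by
  have h1 : HasFDerivAt (fun p : ℝ × (Fin n → ℝ) => g p.1 p.2) _ (t, Γ t) :=
    (hg.differentiable (by simp) (t, Γ t)).hasFDerivAt
  exact h1.comp_hasDerivAt t ((hasDerivAt_id t).prodMk hΓ)

theorem aux_shift {n : ℕ} {g : ℝ → (Fin n → ℝ) → (Fin n → ℝ)}
    (hg : ContDiff ℝ ∞ (fun p : ℝ × (Fin n → ℝ) => g p.1 p.2)) (t : ℝ) (x : Fin n → ℝ) :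
    HasDerivAt (fun s => g (t + s) x)
      (fderiv ℝ (fun p : ℝ × (Fin n → ℝ) => g p.1 p.2) (t, x) (1, 0)) 0 := by
  have h := aux_curve hg t (hasDerivAt_const t x)
  have h' : HasDerivAt (fun s => g s x)
      (fderiv ℝ (fun p : ℝ × (Fin n → ℝ) => g p.1 p.2) (t, x) (1, 0)) (t + 0) := by simpa using h
  exact h'.comp_const_add t 0

theorem aux_omegaFixed {n : ℕ} {g ginv : ℝ → (Fin n → ℝ) → (Fin n → ℝ)}
    (hg : ContDiff ℝ ∞ (fun p : ℝ × (Fin n → ℝ) => g p.1 p.2))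
    (hleft : ∀ t x, ginv t (g t x) = x) (t : ℝ) (x : Fin n → ℝ) :
    omegaFixed g ginv t (g t x)
      = fderiv ℝ (fun p : ℝ × (Fin n → ℝ) => g p.1 p.2) (t, x) (1, 0) := by
  unfold omegaFixed
  rw [hleft]
  exact (aux_shift hg t x).deriv

theorem aux_diff {n : ℕ} {g : ℝ → (Fin n → ℝ) → (Fin n → ℝ)}
    (hg : ContDiff ℝ ∞ (fun p : ℝ × (Fin n → ℝ) => g p.1 p.2)) (t : ℝ) :
    Differentiable ℝ (g t) := by
  have : ContDiff ℝ ∞ (g t) := hg.comp (contDiff_const.prodMk contDiff_id)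
  exact this.differentiable (by simp)

theorem aux_inv {n : ℕ} {g ginv : ℝ → (Fin n → ℝ) → (Fin n → ℝ)}
    (hg : ContDiff ℝ ∞ (fun p : ℝ × (Fin n → ℝ) => g p.1 p.2))
    (hginv : ContDiff ℝ ∞ (fun p : ℝ × (Fin n → ℝ) => ginv p.1 p.2))
    (hleft : ∀ t x, ginv t (g t x) = x)
    (hright : ∀ t q, g t (ginv t q) = q) (t : ℝ) (x v : Fin n → ℝ) :
    fderiv ℝ (g t) x (fderiv ℝ (ginv t) (g t x) v) = v := by
  have h1 : HasFDerivAt (ginv t) _ (g t x) := (aux_diff hginv t (g t x)).hasFDerivAt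
  have h2 : HasFDerivAt (g t) (fderiv ℝ (g t) x) (ginv t (g t x)) := by
    rw [hleft]; exact (aux_diff hg t x).hasFDerivAt
  have h3 := h2.comp (g t x) h1
  have h4 : g t ∘ ginv t = id := by ext1 q; exact hright t q
  rw [h4] at h3
  have := h3.unique (hasFDerivAt_id (g t x))
  exact congrArg (fun A : (Fin n → ℝ) →L[ℝ] (Fin n → ℝ) => A v) this

theorem aux_omegaMoving {n : ℕ} {g ginv : ℝ → (Fin n → ℝ) → (Fin n → ℝ)}
    (hg : ContDiff ℝ ∞ (fun p : ℝ × (Fin n → ℝ) => g p.1 p.2))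
    (hginv : ContDiff ℝ ∞ (fun p : ℝ × (Fin n → ℝ) => ginv p.1 p.2))
    (hleft : ∀ t x, ginv t (g t x) = x)
    (hright : ∀ t q, g t (ginv t q) = q) (t : ℝ) (x : Fin n → ℝ) :
    fderiv ℝ (g t) x (omegaMoving g ginv t x)
      = fderiv ℝ (fun p : ℝ × (Fin n → ℝ) => g p.1 p.2) (t, x) (1, 0) := by
  have h1 : HasFDerivAt (ginv t) (fderiv ℝ (ginv t) (g t x)) (g (t + 0) x) := by
    rw [add_zero]; exact (aux_diff hginv t (g t x)).hasFDerivAt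
  have h2 := h1.comp_hasDerivAt 0 (aux_shift hg t x)
  have h3 : omegaMoving g ginv t x = _ := h2.deriv
  rw [h3, aux_inv hg hginv hleft hright]

theorem aux_split {n : ℕ} (A : ℝ × (Fin n → ℝ) →L[ℝ] (Fin n → ℝ)) (v : Fin n → ℝ) :
    A (0, v) + A (1, 0) = A (1, v) := by
  rw [← map_add]; simp

theorem aux_sum {n : ℕ} (b : Fin n → ℝ) (A : (Fin n → ℝ) →L[ℝ] (Fin n → ℝ)) (ξ : Fin n → ℝ) :
    ∑ i, (∑ k, b k * A (Pi.single i 1) k) * ξ i = ∑ k, b k * A ξ k := by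
  have h : ∀ k, A ξ k = ∑ i, ξ i * A (Pi.single i 1) k := by
    intro k
    conv_lhs => rw [pi_eq_sum_univ' ξ]
    simp [map_sum, Finset.sum_apply]
  simp_rw [h, Finset.sum_mul, Finset.mul_sum]
  rw [Finset.sum_comm]
  refine Finset.sum_congr rfl fun i _ => Finset.sum_congr rfl fun k _ => by ring

/-- The variational derivative through the total derivative of `L`. -/
theorem aux_varDeriv_L {n : ℕ} {L : (Fin n → ℝ) → (Fin n → ℝ) → ℝ → ℝ}
    (hL : ContDiff ℝ ∞ (fun p : (Fin n → ℝ) × (Fin n → ℝ) × ℝ => L p.1 p.2.1 p.2.2))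
    {γ : ℝ → (Fin n → ℝ)} {A : ℝ → ((Fin n → ℝ) × (Fin n → ℝ) × ℝ →L[ℝ] ℝ)}
    {A' : (Fin n → ℝ) × (Fin n → ℝ) × ℝ →L[ℝ] ℝ} (t : ℝ)
    (hA : A = fun s => fderiv ℝ (fun p : (Fin n → ℝ) × (Fin n → ℝ) × ℝ => L p.1 p.2.1 p.2.2)
      (γ s, deriv γ s, s)) (hA' : HasDerivAt A A' t) (η : Fin n → ℝ) :
    varDerivPt L γ η t = A t (η, 0, 0) - A' (0, η, 0) := by
  have hd : ∀ s, HasFDerivAt (fun p : (Fin n → ℝ) × (Fin n → ℝ) × ℝ => L p.1 p.2.1 p.2.2)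
      (A s) (γ s, deriv γ s, s) := by
    intro s
    rw [hA]
    exact (hL.differentiable (by simp) _).hasFDerivAt
  have h1 : fderiv ℝ (fun q => L q (deriv γ t) t) (γ t) η = A t (η, 0, 0) := by
    have h0 :=
      (hd t).comp (γ t) (hasFDerivAt_prodMk_left (𝕜 := ℝ) (γ t) (deriv γ t, t))
    have h : HasFDerivAt (fun q => L q (deriv γ t) t) _ (γ t) := h0
    rw [h.fderiv]
    rfl
  have h2 : (fun s => fderiv ℝ (fun v => L (γ s) v s) (deriv γ s) η)
      = fun s => A s (0, η, 0) := by
    funext s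
    have h0 :=
      (hd s).comp (deriv γ s) ((hasFDerivAt_const (𝕜 := ℝ) (γ s) (deriv γ s)).prodMk
        (hasFDerivAt_prodMk_left (𝕜 := ℝ) (deriv γ s) s))
    have h : HasFDerivAt (fun v => L (γ s) v s) _ (deriv γ s) := h0
    rw [h.fderiv]
    simp
  unfold varDerivPt
  rw [h1, h2]
  congr 1
  have h := hA'.clm_apply (hasDerivAt_const t ((0 : Fin n → ℝ), η, (0 : ℝ)))
  rw [h.deriv]
  simp

theorem aux_varDeriv_l {n : ℕ} {L : (Fin n → ℝ) → (Fin n → ℝ) → ℝ → ℝ}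
    (hL : ContDiff ℝ ∞ (fun p : (Fin n → ℝ) × (Fin n → ℝ) × ℝ => L p.1 p.2.1 p.2.2))
    {g : ℝ → (Fin n → ℝ) → (Fin n → ℝ)}
    (hg : ContDiff ℝ ∞ (fun p : ℝ × (Fin n → ℝ) => g p.1 p.2))
    {G' : ℝ × (Fin n → ℝ) → (ℝ × (Fin n → ℝ) →L[ℝ] (Fin n → ℝ))}
    (hG' : G' = fderiv ℝ (fun p : ℝ × (Fin n → ℝ) => g p.1 p.2))
    {γ Γ : ℝ → (Fin n → ℝ)} (hγ : ContDiff ℝ ∞ γ) (hΓ : ContDiff ℝ ∞ Γ)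
    (hγΓ : ∀ t, g t (Γ t) = γ t) (t : ℝ) (ξ : Fin n → ℝ) :
    varDerivPt (fun x v t => L (g t x) (G' (t, x) (1, v)) t) Γ ξ t
      = varDerivPt L γ (G' (t, Γ t) (0, ξ)) t := by
  have hγ' : ContDiff ℝ ∞ (deriv γ) := (contDiff_infty_iff_deriv.1 hγ).2
  have hΓd : ∀ s, HasDerivAt Γ (deriv Γ s) s :=
    fun s => (hΓ.differentiable (by simp) s).hasDerivAt
  have hvel : ∀ s, G' (s, Γ s) (1, deriv Γ s) = deriv γ s := by
    intro s
    have h := aux_curve hg s (hΓd s)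
    simp_rw [hγΓ] at h
    rw [hG', h.deriv]
  set A : ℝ → ((Fin n → ℝ) × (Fin n → ℝ) × ℝ →L[ℝ] ℝ) :=
    fun s => fderiv ℝ (fun p : (Fin n → ℝ) × (Fin n → ℝ) × ℝ => L p.1 p.2.1 p.2.2)
      (γ s, deriv γ s, s) with hA
  have hAs : ContDiff ℝ ∞ A :=
    (hL.fderiv_right (m := ∞) (by simp)).comp (hγ.prodMk (hγ'.prodMk contDiff_id))
  have hA' : HasDerivAt A (deriv A t) t := (hAs.differentiable (by simp) t).hasDerivAt
  have hd : ∀ s, HasFDerivAt (fun p : (Fin n → ℝ) × (Fin n → ℝ) × ℝ => L p.1 p.2.1 p.2.2)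
      (A s) (γ s, deriv γ s, s) :=
    fun s => (hL.differentiable (by simp) _).hasFDerivAt
  have hGs : ContDiff ℝ ∞ G' := by rw [hG']; exact hg.fderiv_right (m := ∞) (by simp)
  have hG2 : HasFDerivAt G' (fderiv ℝ G' (t, Γ t)) (t, Γ t) :=
    (hGs.differentiable (by simp) _).hasFDerivAt
  have hsymm : ∀ u v, fderiv ℝ G' (t, Γ t) u v = fderiv ℝ G' (t, Γ t) v u := by
    have h : IsSymmSndFDerivAt ℝ (fun p : ℝ × (Fin n → ℝ) => g p.1 p.2) (t, Γ t) :=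
      hg.contDiffAt.isSymmSndFDerivAt (by simpa using WithTop.coe_le_coe.2 (le_top : (2 : ℕ∞) ≤ ⊤))
    rw [hG']
    intro u v
    exact h u v
  rw [aux_varDeriv_L hL t hA hA']
  have h1 : fderiv ℝ (fun x => L (g t x) (G' (t, x) (1, deriv Γ t)) t) (Γ t) ξ
      = A t (G' (t, Γ t) (0, ξ), fderiv ℝ G' (t, Γ t) (0, ξ) (1, deriv Γ t), 0) := by
    have hgt : HasFDerivAt (g t) (fderiv ℝ (g t) (Γ t)) (Γ t) :=
      (aux_diff hg t (Γ t)).hasFDerivAt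
    have hGt := (hG2.comp (Γ t) (hasFDerivAt_prodMk_right t (Γ t))).clm_apply
      (hasFDerivAt_const ((1 : ℝ), deriv Γ t) (Γ t))
    have hAt : HasFDerivAt (fun p : (Fin n → ℝ) × (Fin n → ℝ) × ℝ => L p.1 p.2.1 p.2.2)
        (A t) (g t (Γ t), G' (t, Γ t) (1, deriv Γ t), t) := by
      rw [hγΓ, hvel]; exact hd t
    have h0 :=
      hAt.comp (Γ t) (hgt.prodMk (hGt.prodMk (hasFDerivAt_const t (Γ t))))
    have h : HasFDerivAt (fun x => L (g t x) (G' (t, x) (1, deriv Γ t)) t) _ (Γ t) := h0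
    rw [h.fderiv]
    simp [aux_fderiv_g hg, hG']
  have h2 : (fun s => fderiv ℝ (fun v => L (g s (Γ s)) (G' (s, Γ s) (1, v)) s) (deriv Γ s) ξ)
      = fun s => A s (0, G' (s, Γ s) (0, ξ), 0) := by
    funext s
    have hGt := (G' (s, Γ s)).hasFDerivAt.comp (deriv Γ s)
      (hasFDerivAt_prodMk_right (1 : ℝ) (deriv Γ s))
    have hAt : HasFDerivAt (fun p : (Fin n → ℝ) × (Fin n → ℝ) × ℝ => L p.1 p.2.1 p.2.2)
        (A s) (g s (Γ s), G' (s, Γ s) (1, deriv Γ s), s) := by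
      rw [hγΓ, hvel]; exact hd s
    have h0 :=
      hAt.comp (deriv Γ s) ((hasFDerivAt_const (g s (Γ s)) (deriv Γ s)).prodMk
        (hGt.prodMk (hasFDerivAt_const s (deriv Γ s))))
    have h : HasFDerivAt (fun v => L (g s (Γ s)) (G' (s, Γ s) (1, v)) s) _ (deriv Γ s) := h0
    rw [h.fderiv]
    simp
  have h3 : deriv (fun s => A s (0, G' (s, Γ s) (0, ξ), 0)) t
      = deriv A t (0, G' (t, Γ t) (0, ξ), 0)
        + A t (0, fderiv ℝ G' (t, Γ t) (1, deriv Γ t) (0, ξ), 0) := by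
    have hc : HasDerivAt (fun s => G' (s, Γ s)) (fderiv ℝ G' (t, Γ t) (1, deriv Γ t)) t :=
      hG2.comp_hasDerivAt t ((hasDerivAt_id t).prodMk (hΓd t))
    have hc2 := hc.clm_apply (hasDerivAt_const t ((0 : ℝ), ξ))
    have hc3 := hA'.clm_apply ((hasDerivAt_const t (0 : Fin n → ℝ)).prodMk
      (hc2.prodMk (hasDerivAt_const t (0 : ℝ))))
    rw [hc3.deriv]
    simp
  unfold varDerivPt
  rw [h1, h2, h3, hsymm (0, ξ)]
  have h4 : ∀ a b : Fin n → ℝ, A t (a, b, 0) = A t (a, 0, 0) + A t (0, b, 0) := by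
    intro a b
    rw [← map_add]; simp
  rw [h4]
  ring

/-- Equivalence of nonholonomic dynamics in the fixed and moving frames:
`γ` is a motion of `(ℝⁿ, L, F, 𝒜)` iff `Γ(t) = g_t⁻¹(γ(t))` is a motion of the system
`(ℝⁿ, l, f, 𝐀)` in the moving frame, where
`l(x,ẋ,t) = L(g_t(x), Dg_t(ẋ) + ω_t(g_t(x)), t)`,
`f(x,ẋ,t)(ξ) = F(g_t(x), Dg_t(ẋ) + ω_t(g_t(x)), t)(Dg_t(ξ))`,
`𝐃_t|_x = (Dg_t)⁻¹(𝒟_t|_{g_t(x)})` and `𝐀_t|_x = (Dg_t)⁻¹(𝒜_t|_{g_t(x)}) − Ω_t(x)`. -/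
theorem nonholonomic_motion_fixed_iff_moving {n r : ℕ}
    (g ginv : ℝ → (Fin n → ℝ) → (Fin n → ℝ))
    (hg : ContDiff ℝ ∞ (fun p : ℝ × (Fin n → ℝ) => g p.1 p.2))
    (hginv : ContDiff ℝ ∞ (fun p : ℝ × (Fin n → ℝ) => ginv p.1 p.2))
    (hleft : ∀ t x, ginv t (g t x) = x)
    (hright : ∀ t q, g t (ginv t q) = q)
    (L : (Fin n → ℝ) → (Fin n → ℝ) → ℝ → ℝ)
    (hL : ContDiff ℝ ∞ (fun p : (Fin n → ℝ) × (Fin n → ℝ) × ℝ => L p.1 p.2.1 p.2.2))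
    (F : (Fin n → ℝ) → (Fin n → ℝ) → ℝ → ((Fin n → ℝ) →L[ℝ] ℝ))
    (hF : ContDiff ℝ ∞ (fun p : (Fin n → ℝ) × (Fin n → ℝ) × ℝ => F p.1 p.2.1 p.2.2))
    (a : Fin r → Fin n → (Fin n → ℝ) → ℝ → ℝ)
    (a0 : Fin r → (Fin n → ℝ) → ℝ → ℝ)
    (ha : ∀ ν i, ContDiff ℝ ∞ (fun p : (Fin n → ℝ) × ℝ => a ν i p.1 p.2))
    (ha0 : ∀ ν, ContDiff ℝ ∞ (fun p : (Fin n → ℝ) × ℝ => a0 ν p.1 p.2))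
    (hrank : ∀ q t, LinearIndependent ℝ (fun ν : Fin r => (fun i => a ν i q t : Fin n → ℝ)))
    (γ : ℝ → (Fin n → ℝ)) (hγ : ContDiff ℝ ∞ γ) :
    IsNonholonomicMotion L F a a0 γ ↔
      IsNonholonomicMotion
        -- the Lagrangian `l` in the moving frame
        (fun x v t => L (g t x) (fderiv ℝ (g t) x v + omegaFixed g ginv t (g t x)) t)
        -- the force field `f` in the moving frame
        (fun x v t =>
          (F (g t x) (fderiv ℝ (g t) x v + omegaFixed g ginv t (g t x)) t).comp
            (fderiv ℝ (g t) x))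
        -- the constraints defining `𝐃_t` in the moving frame: `Dg_t(ξ) ∈ 𝒟_t|_{g_t x}`,
        -- expressed through coefficients pulled back by `Dg_t`
        (fun ν i x t => ∑ k, a ν k (g t x) t * fderiv ℝ (g t) x (Pi.single i 1) k)
        -- the affine part of `𝐀_t` in the moving frame:
        -- `ξ ∈ 𝐀_t|_x ↔ Dg_t(ξ + Ω_t(x)) ∈ 𝒜_t|_{g_t x}`
        (fun ν x t =>
          (∑ k, a ν k (g t x) t * fderiv ℝ (g t) x (omegaMoving g ginv t x) k)
            + a0 ν (g t x) t)
        (fun t => ginv t (γ t)) := by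
  have hΓ : ContDiff ℝ ∞ (fun t => ginv t (γ t)) := hginv.comp (contDiff_id.prodMk hγ)
  have hγΓ : ∀ t, g t (ginv t (γ t)) = γ t := fun t => hright t _
  have hvel : ∀ t, fderiv ℝ (fun p : ℝ × (Fin n → ℝ) => g p.1 p.2) (t, ginv t (γ t))
      (1, deriv (fun t => ginv t (γ t)) t) = deriv γ t := by
    intro s
    have h := aux_curve hg s (hΓ.differentiable (by simp) s).hasDerivAt
    simp_rw [hγΓ] at h
    rw [h.deriv]
  have hl : (fun (x v : Fin n → ℝ) (t : ℝ) =>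
      L (g t x) (fderiv ℝ (g t) x v + omegaFixed g ginv t (g t x)) t)
      = fun x v t => L (g t x)
          (fderiv ℝ (fun p : ℝ × (Fin n → ℝ) => g p.1 p.2) (t, x) (1, v)) t := by
    funext x v t
    rw [aux_fderiv_g hg, aux_omegaFixed hg hleft, aux_split]
  have hvar := fun t ξ => aux_varDeriv_l hL hg rfl hγ hΓ hγΓ t ξ
  rw [hl]
  unfold IsNonholonomicMotion
  refine and_congr (forall_congr' fun t => forall_congr' fun ν => ?_) (forall_congr' fun t => ?_)
  · beta_reduce
    rw [aux_sum (fun k => a ν k (g t (ginv t (γ t))) t), aux_omegaMoving hg hginv hleft hright,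
      aux_fderiv_g hg, ← add_assoc, ← Finset.sum_add_distrib]
    simp_rw [← mul_add, ← Pi.add_apply, aux_split, hvel, hγΓ]
  · have hvirt : ∀ ξ, inVirtual
        (fun ν i x t => ∑ k, a ν k (g t x) t * fderiv ℝ (g t) x (Pi.single i 1) k)
        t (ginv t (γ t)) ξ ↔ inVirtual a t (γ t) (fderiv ℝ (g t) (ginv t (γ t)) ξ) := by
      intro ξ
      refine forall_congr' fun ν => ?_
      beta_reduce
      rw [aux_sum (fun k => a ν k (g t (ginv t (γ t))) t), hγΓ]
    have heq : ∀ _ : Fin n → ℝ, fderiv ℝ (g t) (ginv t (γ t)) (deriv (fun t => ginv t (γ t)) t)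
        + omegaFixed g ginv t (g t (ginv t (γ t))) = deriv γ t := by
      intro ξ
      rw [aux_fderiv_g hg, aux_omegaFixed hg hleft, aux_split, hvel]
    have hsurj : ∀ η, ∃ ξ, fderiv ℝ (g t) (ginv t (γ t)) ξ = η := fun η =>
      ⟨_, aux_inv hg hginv hleft hright t (ginv t (γ t)) η⟩
    constructor
    · intro h ξ hξ
      rw [hvar, ← aux_fderiv_g hg]
      beta_reduce
      rw [heq ξ, hγΓ]
      exact h _ ((hvirt ξ).1 hξ)
    · intro h η hη
      obtain ⟨ξ, rfl⟩ := hsurj η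
      have := h ξ ((hvirt ξ).2 hη)
      rw [hvar, ← aux_fderiv_g hg] at this
      beta_reduce at this
      rw [heq ξ, hγΓ] at this
      exact this
end

section
/- (Relation between energies in fixed and moving frames.) Let K_t(q) be a smooth family of symmetric bilinear forms on ℝⁿ, Δ_t(q) a smooth family of linear forms, V(q,t) a smooth potential, and L(q,q̇,t) = ½K_t(q̇,q̇) + Δ_t(q̇) − V(q,t), with energy E_L(q,q̇,t) = ½K_t(q̇,q̇) + V(q,t). Let g be a moving reference frame and define on the moving frame: κ_t(ξ,η)|_x := K_t(Dg_t ξ, Dg_t η)|_{g_t(x)}, δ_t(ξ)|_x := Δ_t(Dg_t ξ) + K_t(ω_t, Dg_t ξ)|_{g_t(x)}, v(x,t) := V(g_t(x),t) − ½K_t(ω_t,ω_t)|_{g_t(x)} − Δ_t(ω_t)|_{g_t(x)}, E_l(x,ẋ,t) := ½κ_t(ẋ,ẋ) + v(x,t), and the fiber derivative 𝔽l(x,ẋ,t)(ξ) := κ_t(ẋ,ξ) + δ_t(ξ). Then for all (x,ẋ,t): E_L(q,q̇,t) evaluated at q = g_t(x), q̇ = Dg_t(ẋ) + ω_t(g_t(x))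 equals E_l(x,ẋ,t) + 𝔽l(x,ẋ,t)(Ω_t(x)). -/
open scoped ContDiff

section

variable {n : ℕ} (K : ℝ → (Fin n → ℝ) → ((Fin n → ℝ) →L[ℝ] (Fin n → ℝ) →L[ℝ] ℝ))
  (Δ : ℝ → (Fin n → ℝ) → ((Fin n → ℝ) →L[ℝ] ℝ)) (V : (Fin n → ℝ) → ℝ → ℝ)
  (g ginv : ℝ → (Fin n → ℝ) → (Fin n → ℝ))

/-- The energy of the natural mechanical system in the fixed frame:
`E_L(q,q̇,t) = ½K_t(q̇,q̇) + V(q,t)`. -/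
noncomputable def energyFixed (q v : Fin n → ℝ) (t : ℝ) : ℝ :=
  (1 / 2) * K t q v v + V q t

/-- Kinetic metric in the moving frame: `κ_t(ξ,η)|_x = K_t(Dg_t ξ, Dg_t η)|_{g_t(x)}`. -/
noncomputable def kappaMoving (t : ℝ) (x ξ η : Fin n → ℝ) : ℝ :=
  K t (g t x) (fderiv ℝ (g t) x ξ) (fderiv ℝ (g t) x η)

/-- Linear term in the moving frame:
`δ_t(ξ)|_x = Δ_t(Dg_t ξ) + K_t(ω_t, Dg_t ξ)|_{g_t(x)}`. -/
noncomputable def deltaMoving (t : ℝ) (x ξ : Fin n → ℝ) : ℝ :=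
  Δ t (g t x) (fderiv ℝ (g t) x ξ)
    + K t (g t x) (omegaFixed g ginv t (g t x)) (fderiv ℝ (g t) x ξ)

/-- Potential in the moving frame:
`v(x,t) = V(g_t(x),t) − ½K_t(ω_t,ω_t) − Δ_t(ω_t)`, evaluated at `g_t(x)`. -/
noncomputable def potentialMoving (x : Fin n → ℝ) (t : ℝ) : ℝ :=
  V (g t x) t
    - (1 / 2) * K t (g t x) (omegaFixed g ginv t (g t x)) (omegaFixed g ginv t (g t x))
    - Δ t (g t x) (omegaFixed g ginv t (g t x))

/-- Energy in the moving frame: `E_l(x,ẋ,t) = ½κ_t(ẋ,ẋ) + v(x,t)`. -/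
noncomputable def energyMoving (x v : Fin n → ℝ) (t : ℝ) : ℝ :=
  (1 / 2) * kappaMoving K g t x v v + potentialMoving K Δ V g ginv x t

/-- Fiber derivative of the Lagrangian in the moving frame:
`𝔽l(x,ẋ,t)(ξ) = κ_t(ẋ,ξ) + δ_t(ξ)`. -/
noncomputable def fiberDerMoving (x v : Fin n → ℝ) (t : ℝ) (ξ : Fin n → ℝ) : ℝ :=
  kappaMoving K g t x v ξ + deltaMoving K Δ g ginv t x ξ

/-- Relation between the energies in the fixed and in the moving frame:
`E_L(g_t(x), Dg_t(ẋ) + ω_t(g_t(x)), t) = E_l(x,ẋ,t) + 𝔽l(x,ẋ,t)(Ω_t(x))`. -/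
theorem energy_fixed_eq_energy_moving_add_fiberDer
    (hK : ContDiff ℝ ∞ (fun p : ℝ × (Fin n → ℝ) => K p.1 p.2))
    (hΔ : ContDiff ℝ ∞ (fun p : ℝ × (Fin n → ℝ) => Δ p.1 p.2))
    (hV : ContDiff ℝ ∞ (fun p : (Fin n → ℝ) × ℝ => V p.1 p.2))
    (hKsymm : ∀ t q v w, K t q v w = K t q w v)
    (hg : ContDiff ℝ ∞ (fun p : ℝ × (Fin n → ℝ) => g p.1 p.2))
    (hginv : ContDiff ℝ ∞ (fun p : ℝ × (Fin n → ℝ) => ginv p.1 p.2))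
    (hleft : ∀ t x, ginv t (g t x) = x)
    (hright : ∀ t q, g t (ginv t q) = q)
    (x v : Fin n → ℝ) (t : ℝ) :
    energyFixed K V (g t x) (fderiv ℝ (g t) x v + omegaFixed g ginv t (g t x)) t
      = energyMoving K Δ V g ginv x v t
        + fiberDerMoving K Δ g ginv x v t (omegaMoving g ginv t x) := by
  have hdgt : DifferentiableAt ℝ (fun s : ℝ => g (t + s) x) 0 := by
    have h : ContDiff ℝ ∞ (fun s : ℝ => g (t + s) x) :=
      hg.comp (f := fun s : ℝ => (t + s, x)) (by fun_prop)
    exact h.contDiffAt.differentiableAt (by simp)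
  have hgx : DifferentiableAt ℝ (g t) x := by
    have h : ContDiff ℝ ∞ (g t) :=
      hg.comp (f := fun y : Fin n → ℝ => (t, y)) (by fun_prop)
    exact h.contDiffAt.differentiableAt (by simp)
  have hgi : DifferentiableAt ℝ (ginv t) (g (t + 0) x) := by
    have h : ContDiff ℝ ∞ (ginv t) :=
      hginv.comp (f := fun y : Fin n → ℝ => (t, y)) (by fun_prop)
    exact h.contDiffAt.differentiableAt (by simp)
  have hc : DifferentiableAt ℝ (fun s : ℝ => ginv t (g (t + s) x)) 0 :=
    DifferentiableAt.comp (g := ginv t) (f := fun s : ℝ => g (t + s) x) 0 hgi hdgt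
  have hx : ginv t (g (t + 0) x) = x := by rw [add_zero, hleft]
  have key : fderiv ℝ (g t) x (omegaMoving g ginv t x) = omegaFixed g ginv t (g t x) := by
    have h1 : HasFDerivAt (g t) (fderiv ℝ (g t) x) ((fun s : ℝ => ginv t (g (t + s) x)) 0) := by
      simp only [hx]
      exact hgx.hasFDerivAt
    have h2 := (h1.comp_hasDerivAt (0 : ℝ) hc.hasDerivAt).deriv
    unfold omegaMoving omegaFixed
    rw [← h2, hleft]
    congr 1
    funext s
    simp [Function.comp, hright]
  unfold energyFixed energyMoving fiberDerMoving potentialMoving deltaMoving kappaMoving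
  rw [key]
  simp only [map_add, add_apply, ContinuousLinearMap.add_apply]
  rw [hKsymm t (g t x) (omegaFixed g ginv t (g t x)) (fderiv ℝ (g t) x v)]
  ring

end
end

section
/- (Voronec equations.) Let L(q,q̇,t) be a smooth Lagrangian on ℝⁿ × ℝⁿ × ℝ with n = m + r, F_i(q,q̇,t) smooth generalized forces, and smooth constraints q̇^{m+ν} = Σ_{i=1}^m a_{νi}(q,t) q̇^i + a_ν(q,t), ν = 1,…,r. Define L_c(q, q̇^1,…,q̇^m, t) := L with q̇^{m+ν} substituted by Σ_i a_{νi} q̇^i + a_ν, K_ν := (∂L/∂q̇^{m+ν}) with the same substitution, A^{(ν)}_{ij} := (∂a_{νi}/∂q^j + Σ_μ a_{μj} ∂a_{νi}/∂q^{m+μ}) − (∂a_{νj}/∂q^i + Σ_μ a_{μi} ∂a_{νj}/∂q^{m+μ}), and A^{(ν)}_i := (∂a_{νi}/∂t + Σ_μ a_μ ∂a_{νi}/∂q^{m+μ}) − (∂a_ν/∂q^i + Σ_μ a_{μi} ∂a_ν/∂q^{m+μ}). Then a smooth curve q(t) satisfying the constraints is a motion of the system — i.e. Σ_{i=1}^n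 (∂L/∂q^i − (d/dt)(∂L/∂q̇^i) + F_i) η^i = 0 for all virtual displacements η with η^{m+ν} = Σ_{i=1}^m a_{νi} η^i — if and only if for i = 1,…,m: (d/dt)(∂L_c/∂q̇^i) = ∂L_c/∂q^i + F_i + Σ_{ν=1}^r a_{νi}(∂L_c/∂q^{m+ν} + F_{m+ν}) + Σ_{ν=1}^r K_ν (Σ_{j=1}^m A^{(ν)}_{ij} q̇^j + A^{(ν)}_i), all quantities evaluated along (q(t), q̇^1(t),…,q̇^m(t), t). -/
open scoped ContDiff

namespace Voronec

variable {m r : ℕ}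

/-- Configuration space `ℝⁿ`, `n = m + r`, split into the first `m` coordinates
`(q^1,…,q^m)` and the last `r` coordinates `(q^{m+1},…,q^{m+r})`. -/
abbrev Conf (m r : ℕ) := (Fin m → ℝ) × (Fin r → ℝ)

/-- Partial derivative `∂f/∂q^i`, `i = 1,…,m`. -/
noncomputable def pdBase (f : Conf m r → ℝ → ℝ) (q : Conf m r) (t : ℝ) (i : Fin m) : ℝ :=
  fderiv ℝ (fun y => f (y, q.2) t) q.1 (Pi.single i 1)

/-- Partial derivative `∂f/∂q^{m+μ}`, `μ = 1,…,r`. -/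
noncomputable def pdFib (f : Conf m r → ℝ → ℝ) (q : Conf m r) (t : ℝ) (μ : Fin r) : ℝ :=
  fderiv ℝ (fun w => f (q.1, w) t) q.2 (Pi.single μ 1)

/-- Partial derivative `∂f/∂t`. -/
noncomputable def pdT (f : Conf m r → ℝ → ℝ) (q : Conf m r) (t : ℝ) : ℝ :=
  deriv (f q) t

/-- Voronec coefficient `A^{(ν)}_{ij}`. -/
noncomputable def coeffA (a : Fin r → Fin m → Conf m r → ℝ → ℝ)
    (ν : Fin r) (i j : Fin m) (q : Conf m r) (t : ℝ) : ℝ :=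
  (pdBase (a ν i) q t j + ∑ μ, a μ j q t * pdFib (a ν i) q t μ)
    - (pdBase (a ν j) q t i + ∑ μ, a μ i q t * pdFib (a ν j) q t μ)

/-- Voronec coefficient `A^{(ν)}_i`. -/
noncomputable def coeffA0 (a : Fin r → Fin m → Conf m r → ℝ → ℝ)
    (a0 : Fin r → Conf m r → ℝ → ℝ) (ν : Fin r) (i : Fin m) (q : Conf m r) (t : ℝ) : ℝ :=
  (pdT (a ν i) q t + ∑ μ, a0 μ q t * pdFib (a ν i) q t μ)
    - (pdBase (a0 ν) q t i + ∑ μ, a μ i q t * pdFib (a0 ν) q t μ)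

/-- The constrained velocity: `q̇^{m+ν} = Σ_i a_{νi} q̇^i + a_ν`. -/
def constrVel (a : Fin r → Fin m → Conf m r → ℝ → ℝ) (a0 : Fin r → Conf m r → ℝ → ℝ)
    (q : Conf m r) (v : Fin m → ℝ) (t : ℝ) : Fin r → ℝ :=
  fun ν => (∑ i, a ν i q t * v i) + a0 ν q t

/-- The constrained Lagrangian `L_c`: `L` with `q̇^{m+ν}` substituted by
`Σ_i a_{νi} q̇^i + a_ν`. -/
def constrLag (L : Conf m r → (Fin m → ℝ) → (Fin r → ℝ) → ℝ → ℝ)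
    (a : Fin r → Fin m → Conf m r → ℝ → ℝ) (a0 : Fin r → Conf m r → ℝ → ℝ)
    (q : Conf m r) (v : Fin m → ℝ) (t : ℝ) : ℝ :=
  L q v (constrVel a a0 q v t) t

/-- `K_ν := ∂L/∂q̇^{m+ν}` restricted to the constrained subspace. -/
noncomputable def coeffK (L : Conf m r → (Fin m → ℝ) → (Fin r → ℝ) → ℝ → ℝ)
    (a : Fin r → Fin m → Conf m r → ℝ → ℝ) (a0 : Fin r → Conf m r → ℝ → ℝ)
    (ν : Fin r) (q : Conf m r) (v : Fin m → ℝ) (t : ℝ) : ℝ :=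
  fderiv ℝ (fun w => L q v w t) (constrVel a a0 q v t) (Pi.single ν 1)

/-- Expansion of a linear functional on a finite coordinate space. -/
lemma lin_expand {k : ℕ} (f : (Fin k → ℝ) →ₗ[ℝ] ℝ) (x : Fin k → ℝ) :
    f x = ∑ i, x i * f (Pi.single i 1) := by
  rw [LinearMap.pi_apply_eq_sum_univ f x]
  refine Finset.sum_congr rfl fun i _ => ?_
  rw [smul_eq_mul]
  congr 2
  ext j
  simp [Pi.single_apply, eq_comm]

/-- The velocity-momentum phase space. -/
abbrev Ph (m r : ℕ) := Conf m r × (Fin m → ℝ) × (Fin r → ℝ) × ℝ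

/-- Uncurried Lagrangian. -/
def unL (L : Conf m r → (Fin m → ℝ) → (Fin r → ℝ) → ℝ → ℝ) : Ph m r → ℝ :=
  fun p => L p.1 p.2.1 p.2.2.1 p.2.2.2

/-- Uncurried coefficient. -/
def un (f : Conf m r → ℝ → ℝ) : Conf m r × ℝ → ℝ := fun p => f p.1 p.2

lemma fiber_expand (P : Ph m r →L[ℝ] ℝ) (x : Conf m r) (v : Fin m → ℝ) (w : Fin r → ℝ) :
    P (x, v, w, 0) = P (x, v, 0, 0) + ∑ ν, w ν * P (0, 0, Pi.single ν 1, 0) := by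
  have h : P (x, v, w, 0) = P (x, v, 0, 0) + P (0, 0, w, 0) := by
    rw [← map_add]; simp
  rw [h]
  have := lin_expand ((P.comp ((ContinuousLinearMap.inr ℝ (Conf m r) _).comp
    ((ContinuousLinearMap.inr ℝ (Fin m → ℝ) _).comp
      (ContinuousLinearMap.inl ℝ (Fin r → ℝ) ℝ)))).toLinearMap) w
  simpa using this

lemma conf_expand (P : Conf m r × ℝ →L[ℝ] ℝ) (v : Fin m → ℝ) (w : Fin r → ℝ) (c : ℝ) :
    P ((v, w), c) = (∑ j, v j * P ((Pi.single j 1, 0), 0))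
      + (∑ μ, w μ * P ((0, Pi.single μ 1), 0)) + c * P (0, 1) := by
  have h : P ((v, w), c) = P ((v, 0), 0) + P ((0, w), 0) + P (c • (0, 1)) := by
    rw [← map_add, ← map_add]; simp
  rw [h, map_smul, smul_eq_mul]
  have h1 := lin_expand ((P.comp ((ContinuousLinearMap.inl ℝ (Conf m r) ℝ).comp
    (ContinuousLinearMap.inl ℝ (Fin m → ℝ) (Fin r → ℝ)))).toLinearMap) v
  have h2 := lin_expand ((P.comp ((ContinuousLinearMap.inl ℝ (Conf m r) ℝ).comp
    (ContinuousLinearMap.inr ℝ (Fin m → ℝ) (Fin r → ℝ)))).toLinearMap) w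
  simp at h1 h2
  rw [h1, h2]

lemma pdBase_eq (f : Conf m r → ℝ → ℝ) (hf : Differentiable ℝ (un f)) (q t i) :
    pdBase f q t i = fderiv ℝ (un f) (q, t) ((Pi.single i 1, 0), 0) := by
  have h : HasFDerivAt (fun y : Fin m → ℝ => (((y, q.2), t) : Conf m r × ℝ))
      (((ContinuousLinearMap.id ℝ _).prod 0).prod 0) q.1 :=
    ((hasFDerivAt_id _).prodMk (hasFDerivAt_const _ _)).prodMk (hasFDerivAt_const _ _)
  have h2 := (hf ((q.1, q.2), t)).hasFDerivAt.comp q.1 h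
  have h3 : HasFDerivAt (fun y => f (y, q.2) t) _ q.1 := h2
  rw [pdBase, h3.fderiv]; simp

lemma pdFib_eq (f : Conf m r → ℝ → ℝ) (hf : Differentiable ℝ (un f)) (q t i) :
    pdFib f q t i = fderiv ℝ (un f) (q, t) ((0, Pi.single i 1), 0) := by
  have h : HasFDerivAt (fun y : Fin r → ℝ => (((q.1, y), t) : Conf m r × ℝ))
      (((0 : (Fin r → ℝ) →L[ℝ] (Fin m → ℝ)).prod (ContinuousLinearMap.id ℝ _)).prod 0) q.2 :=
    ((hasFDerivAt_const _ _).prodMk (hasFDerivAt_id _)).prodMk (hasFDerivAt_const _ _)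
  have h2 := (hf ((q.1, q.2), t)).hasFDerivAt.comp q.2 h
  have h3 : HasFDerivAt (fun y => f (q.1, y) t) _ q.2 := h2
  rw [pdFib, h3.fderiv]; simp

lemma pdT_eq (f : Conf m r → ℝ → ℝ) (hf : Differentiable ℝ (un f)) (q t) :
    pdT f q t = fderiv ℝ (un f) (q, t) (0, 1) := by
  have h : HasDerivAt (fun s : ℝ => ((q, s) : Conf m r × ℝ)) (0, 1) t :=
    (hasDerivAt_const _ _).prodMk (hasDerivAt_id _)
  have h2 : HasDerivAt (f q) _ t := (hf (q, t)).hasFDerivAt.comp_hasDerivAt t h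
  rw [pdT, h2.deriv]

/-- Derivative of the constrained Lagrangian along a line in the base velocity. -/
lemma constrLag_vel (L : Conf m r → (Fin m → ℝ) → (Fin r → ℝ) → ℝ → ℝ)
    (hL : Differentiable ℝ (unL L))
    (a : Fin r → Fin m → Conf m r → ℝ → ℝ) (a0 : Fin r → Conf m r → ℝ → ℝ)
    (x : Conf m r) (v : Fin m → ℝ) (t : ℝ) (i : Fin m) :
    fderiv ℝ (fun v => constrLag L a a0 x v t) v (Pi.single i 1)
      = fderiv ℝ (unL L) (x, v, constrVel a a0 x v t, t) (0, Pi.single i 1, 0, 0)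
        + ∑ ν, a ν i x t * fderiv ℝ (unL L) (x, v, constrVel a a0 x v t, t)
            (0, 0, Pi.single ν 1, 0) := by
  have hc : HasFDerivAt (fun v => constrVel a a0 x v t)
      (ContinuousLinearMap.pi fun ν => ∑ j, a ν j x t •
        (ContinuousLinearMap.proj j : (Fin m → ℝ) →L[ℝ] ℝ)) v := by
    rw [hasFDerivAt_pi]
    intro ν
    refine HasFDerivAt.add_const _ (HasFDerivAt.fun_sum fun j _ => ?_)
    exact (hasFDerivAt_apply j v).const_mul _
  have h := (hasFDerivAt_const x v).prodMk ((hasFDerivAt_id v).prodMk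
    (hc.prodMk (hasFDerivAt_const t v)))
  have h2 : HasFDerivAt (fun v => constrLag L a a0 x v t) _ v :=
    HasFDerivAt.comp (g := unL L) v (hL (x, v, constrVel a a0 x v t, t)).hasFDerivAt h
  rw [h2.fderiv]
  rw [← fiber_expand _ _ _ (fun ν => a ν i x t)]
  simp only [ContinuousLinearMap.comp_apply, ContinuousLinearMap.prod_apply]
  congr 1
  simp
  ext ν
  simp [Pi.single_apply]

/-- Derivative of the constrained Lagrangian in a configuration direction. -/
lemma constrLag_conf (L : Conf m r → (Fin m → ℝ) → (Fin r → ℝ) → ℝ → ℝ)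
    (hL : Differentiable ℝ (unL L))
    (a : Fin r → Fin m → Conf m r → ℝ → ℝ) (a0 : Fin r → Conf m r → ℝ → ℝ)
    (ha : ∀ ν i, Differentiable ℝ (un (a ν i))) (ha0 : ∀ ν, Differentiable ℝ (un (a0 ν)))
    {F : Type*} [NormedAddCommGroup F] [NormedSpace ℝ F] (φ : F → Conf m r) (φ' : F →L[ℝ] Conf m r)
    (y : F) (hφ : HasFDerivAt φ φ' y) (v : Fin m → ℝ) (t : ℝ) (h : F) :
    fderiv ℝ (fun y => constrLag L a a0 (φ y) v t) y h
      = fderiv ℝ (unL L) (φ y, v, constrVel a a0 (φ y) v t, t) (φ' h, 0, 0, 0)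
        + ∑ ν, ((∑ j, fderiv ℝ (un (a ν j)) (φ y, t) (φ' h, 0) * v j)
            + fderiv ℝ (un (a0 ν)) (φ y, t) (φ' h, 0)) *
            fderiv ℝ (unL L) (φ y, v, constrVel a a0 (φ y) v t, t)
            (0, 0, Pi.single ν 1, 0) := by
  have hp : HasFDerivAt (fun y => (φ y, t)) (φ'.prod 0) y := hφ.prodMk (hasFDerivAt_const t y)
  have hc : HasFDerivAt (fun y => constrVel a a0 (φ y) v t)
      (ContinuousLinearMap.pi fun ν => (∑ j, v j •
        ((fderiv ℝ (un (a ν j)) (φ y, t)).comp (φ'.prod 0)))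
        + (fderiv ℝ (un (a0 ν)) (φ y, t)).comp (φ'.prod 0)) y := by
    rw [hasFDerivAt_pi]
    intro ν
    refine HasFDerivAt.add (HasFDerivAt.fun_sum fun j _ => ?_) ?_
    · exact ((ha ν j (φ y, t)).hasFDerivAt.comp y hp).mul_const (v j)
    · exact ((ha0 ν (φ y, t)).hasFDerivAt.comp y hp)
  have h1 := hφ.prodMk ((hasFDerivAt_const v y).prodMk
    (hc.prodMk (hasFDerivAt_const t y)))
  have h2 : HasFDerivAt (fun y => constrLag L a a0 (φ y) v t) _ y :=
    HasFDerivAt.comp (g := unL L) y (hL (φ y, v, constrVel a a0 (φ y) v t, t)).hasFDerivAt h1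
  rw [h2.fderiv]
  rw [← fiber_expand _ _ _ (fun ν => ((∑ j, fderiv ℝ (un (a ν j)) (φ y, t) (φ' h, 0) * v j)
            + fderiv ℝ (un (a0 ν)) (φ y, t) (φ' h, 0)))]
  simp only [ContinuousLinearMap.comp_apply, ContinuousLinearMap.prod_apply]
  congr 1
  simp
  ext ν
  simp [mul_comm]

lemma coeffK_eq (L : Conf m r → (Fin m → ℝ) → (Fin r → ℝ) → ℝ → ℝ)
    (hL : Differentiable ℝ (unL L))
    (a : Fin r → Fin m → Conf m r → ℝ → ℝ) (a0 : Fin r → Conf m r → ℝ → ℝ)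
    (x : Conf m r) (v : Fin m → ℝ) (t : ℝ) (ν : Fin r) :
    coeffK L a a0 ν x v t
      = fderiv ℝ (unL L) (x, v, constrVel a a0 x v t, t) (0, 0, Pi.single ν 1, 0) := by
  have h : HasFDerivAt (fun w : Fin r → ℝ => ((x, v, w, t) : Ph m r))
      (ContinuousLinearMap.prod 0 (ContinuousLinearMap.prod 0
        ((ContinuousLinearMap.id ℝ _).prod 0))) (constrVel a a0 x v t) :=
    (hasFDerivAt_const x _).prodMk ((hasFDerivAt_const v _).prodMk
      ((hasFDerivAt_id _).prodMk (hasFDerivAt_const t _)))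
  have h2 : HasFDerivAt (fun w => L x v w t) _ (constrVel a a0 x v t) :=
    HasFDerivAt.comp (g := unL L) (f := fun w => (x, v, w, t)) _ (hL (x, v, constrVel a a0 x v t, t)).hasFDerivAt h
  rw [coeffK, h2.fderiv]; simp

lemma L_conf (L : Conf m r → (Fin m → ℝ) → (Fin r → ℝ) → ℝ → ℝ)
    (hL : Differentiable ℝ (unL L))
    (x : Conf m r) (v : Fin m → ℝ) (w : Fin r → ℝ) (t : ℝ) (h : Conf m r) :
    fderiv ℝ (fun x => L x v w t) x h = fderiv ℝ (unL L) (x, v, w, t) (h, 0, 0, 0) := by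
  have h1 : HasFDerivAt (fun x : Conf m r => ((x, v, w, t) : Ph m r))
      ((ContinuousLinearMap.id ℝ _).prod 0) x :=
    (hasFDerivAt_id x).prodMk (hasFDerivAt_const (v, w, t) x)
  have h2 : HasFDerivAt (fun x => L x v w t) _ x :=
    HasFDerivAt.comp (g := unL L) (f := fun x => (x, v, w, t)) _ (hL (x, v, w, t)).hasFDerivAt h1
  rw [h2.fderiv]; rfl

lemma L_vel (L : Conf m r → (Fin m → ℝ) → (Fin r → ℝ) → ℝ → ℝ)
    (hL : Differentiable ℝ (unL L))
    (x : Conf m r) (v : Fin m → ℝ) (w : Fin r → ℝ) (t : ℝ) (h : (Fin m → ℝ) × (Fin r → ℝ)) :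
    fderiv ℝ (fun u : (Fin m → ℝ) × (Fin r → ℝ) => L x u.1 u.2 t) (v, w) h
      = fderiv ℝ (unL L) (x, v, w, t) (0, h.1, h.2, 0) := by
  have h1 := (hasFDerivAt_const x (v, w)).prodMk ((hasFDerivAt_fst (𝕜 := ℝ) (p := (v, w))).prodMk
    ((hasFDerivAt_snd (𝕜 := ℝ) (p := (v, w))).prodMk (hasFDerivAt_const t (v, w))))
  have h2 : HasFDerivAt (fun u : (Fin m → ℝ) × (Fin r → ℝ) => L x u.1 u.2 t) _ (v, w) :=
    HasFDerivAt.comp (g := unL L) (v, w) (hL (x, v, w, t)).hasFDerivAt h1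
  rw [h2.fderiv]; simp

/-- The Voronec equations: an admissible smooth curve satisfies the d'Alembert–Lagrange
principle (with virtual displacements `η^{m+ν} = Σ_i a_{νi} η^i`) if and only if it
satisfies the closed-form Voronec equations in the independent velocities `q̇^1,…,q̇^m`. -/
theorem voronec_equations
    (L : Conf m r → (Fin m → ℝ) → (Fin r → ℝ) → ℝ → ℝ)
    (hL : ContDiff ℝ ∞
      (fun p : Conf m r × (Fin m → ℝ) × (Fin r → ℝ) × ℝ => L p.1 p.2.1 p.2.2.1 p.2.2.2))
    (Fb : Conf m r → (Fin m → ℝ) → (Fin r → ℝ) → ℝ → Fin m → ℝ)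
    (Ff : Conf m r → (Fin m → ℝ) → (Fin r → ℝ) → ℝ → Fin r → ℝ)
    (hFb : ContDiff ℝ ∞
      (fun p : Conf m r × (Fin m → ℝ) × (Fin r → ℝ) × ℝ => Fb p.1 p.2.1 p.2.2.1 p.2.2.2))
    (hFf : ContDiff ℝ ∞
      (fun p : Conf m r × (Fin m → ℝ) × (Fin r → ℝ) × ℝ => Ff p.1 p.2.1 p.2.2.1 p.2.2.2))
    (a : Fin r → Fin m → Conf m r → ℝ → ℝ) (a0 : Fin r → Conf m r → ℝ → ℝ)
    (ha : ∀ ν i, ContDiff ℝ ∞ (fun p : Conf m r × ℝ => a ν i p.1 p.2))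
    (ha0 : ∀ ν, ContDiff ℝ ∞ (fun p : Conf m r × ℝ => a0 ν p.1 p.2))
    (q : ℝ → Conf m r) (hq : ContDiff ℝ ∞ q)
    -- the curve is admissible: it satisfies the constraints
    (hadm : ∀ t, deriv (fun s => (q s).2) t
      = constrVel a a0 (q t) (deriv (fun s => (q s).1) t) t) :
    -- d'Alembert–Lagrange principle
    (∀ t, ∀ η1 : Fin m → ℝ,
      (fderiv ℝ (fun x : Conf m r =>
          L x (deriv (fun s => (q s).1) t) (deriv (fun s => (q s).2) t) t) (q t)
          (η1, fun ν => ∑ i, a ν i (q t) t * η1 i))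
        - deriv (fun s =>
            fderiv ℝ (fun v : (Fin m → ℝ) × (Fin r → ℝ) => L (q s) v.1 v.2 s)
              (deriv (fun u => (q u).1) s, deriv (fun u => (q u).2) s)
              (η1, fun ν => ∑ i, a ν i (q t) t * η1 i)) t
        + ((∑ i, Fb (q t) (deriv (fun s => (q s).1) t) (deriv (fun s => (q s).2) t) t i
              * η1 i)
            + ∑ ν, Ff (q t) (deriv (fun s => (q s).1) t) (deriv (fun s => (q s).2) t) t ν
              * (∑ i, a ν i (q t) t * η1 i)) = 0)
    ↔
    -- the Voronec equations
    (∀ t, ∀ i : Fin m,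
      deriv (fun s =>
        fderiv ℝ (fun v => constrLag L a a0 (q s) v s) (deriv (fun u => (q u).1) s)
          (Pi.single i 1)) t
      = fderiv ℝ (fun y => constrLag L a a0 (y, (q t).2) (deriv (fun u => (q u).1) t) t)
          (q t).1 (Pi.single i 1)
        + Fb (q t) (deriv (fun s => (q s).1) t) (deriv (fun s => (q s).2) t) t i
        + (∑ ν, a ν i (q t) t *
            (fderiv ℝ
              (fun w => constrLag L a a0 ((q t).1, w) (deriv (fun u => (q u).1) t) t)
              (q t).2 (Pi.single ν 1)
             + Ff (q t) (deriv (fun s => (q s).1) t) (deriv (fun s => (q s).2) t) t ν))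
        + ∑ ν, coeffK L a a0 ν (q t) (deriv (fun u => (q u).1) t) t *
            ((∑ j, coeffA a ν i j (q t) t * deriv (fun u => (q u).1) t j)
              + coeffA0 a a0 ν i (q t) t)) := by
  have hGd : Differentiable ℝ (unL L) := hL.differentiable (by simp)
  have had : ∀ ν i, Differentiable ℝ (un (a ν i)) := fun ν i => (ha ν i).differentiable (by simp)
  have ha0d : ∀ ν, Differentiable ℝ (un (a0 ν)) := fun ν => (ha0 ν).differentiable (by simp)
  have hq1 : ContDiff ℝ ∞ (fun s => (q s).1) := hq.fst
  have hq2 : ContDiff ℝ ∞ (fun s => (q s).2) := hq.snd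
  have hv : ContDiff ℝ ∞ (deriv (fun s => (q s).1)) := by
    exact (contDiff_infty_iff_deriv.1 hq1).2
  have hw : ContDiff ℝ ∞ (deriv (fun s => (q s).2)) := by
    exact (contDiff_infty_iff_deriv.1 hq2).2
  have hqd : ∀ t, HasDerivAt q (deriv (fun s => (q s).1) t, deriv (fun s => (q s).2) t) t :=
    fun t => (hq1.differentiable (by simp) t).hasDerivAt.prodMk
      (hq2.differentiable (by simp) t).hasDerivAt
  generalize hvd : deriv (fun s => (q s).1) = v at *
  generalize hwd : deriv (fun s => (q s).2) = w at *
  have hDG : ContDiff ℝ ∞ (fderiv ℝ (unL L)) := ContDiff.fderiv_right (m := ∞) hL (by simp)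
  have hPs : ContDiff ℝ ∞ (fun s => fderiv ℝ (unL L) (q s, v s, w s, s)) :=
    hDG.comp (hq.prodMk (hv.prodMk (hw.prodMk contDiff_id)))
  have hP : ∀ t, HasDerivAt (fun s => fderiv ℝ (unL L) (q s, v s, w s, s))
      (deriv (fun s => fderiv ℝ (unL L) (q s, v s, w s, s)) t) t :=
    fun t => (hPs.differentiable (by simp) t).hasDerivAt
  generalize hP'd : deriv (fun s => fderiv ℝ (unL L) (q s, v s, w s, s)) = P' at hP
  have hPc : ∀ t h, HasDerivAt (fun s => fderiv ℝ (unL L) (q s, v s, w s, s) h) (P' t h) t := by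
    intro t h
    simpa using (hP t).clm_apply (hasDerivAt_const t h)
  have hat : ∀ ν i t, HasDerivAt (fun s => a ν i (q s) s)
      (fderiv ℝ (un (a ν i)) (q t, t) ((v t, w t), 1)) t := by
    intro ν i t
    have h : HasDerivAt (fun s => (q s, s)) ((v t, w t), 1) t := (hqd t).prodMk (hasDerivAt_id t)
    exact HasFDerivAt.comp_hasDerivAt (f := fun s => (q s, s)) t
      ((had ν i) (q t, t)).hasFDerivAt h
  -- rewrite d'Alembert
  have hdA : ∀ t (h : (Fin m → ℝ) × (Fin r → ℝ)), deriv (fun s =>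
            fderiv ℝ (fun v : (Fin m → ℝ) × (Fin r → ℝ) => L (q s) v.1 v.2 s)
              (v s, w s) h) t = P' t (0, h.1, h.2, 0) := by
    intro t h
    rw [← (hPc t (0, h.1, h.2, 0)).deriv]
    congr 1
    ext s
    exact L_vel L hGd _ _ _ _ _
  have hVor : ∀ t i, deriv (fun s =>
        fderiv ℝ (fun v => constrLag L a a0 (q s) v s) (v s) (Pi.single i 1)) t
      = P' t (0, Pi.single i 1, 0, 0) + ∑ ν,
        (fderiv ℝ (un (a ν i)) (q t, t) ((v t, w t), 1)
          * fderiv ℝ (unL L) (q t, v t, w t, t) (0, 0, Pi.single ν 1, 0)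
        + a ν i (q t) t * P' t (0, 0, Pi.single ν 1, 0)) := by
    intro t i
    have h := (hPc t (0, Pi.single i 1, 0, 0)).add
      (HasDerivAt.fun_sum (u := Finset.univ) fun ν _ =>
        (hat ν i t).mul (hPc t (0, 0, Pi.single ν 1, 0)))
    rw [← h.deriv]
    congr 1
    ext s
    rw [constrLag_vel L hGd, ← hadm s]
    simp
  -- linear form
  have key : ∀ t, ∃ ℓ : (Fin m → ℝ) →ₗ[ℝ] ℝ, ∀ η1 : Fin m → ℝ, ℓ η1 =
      (fderiv ℝ (fun x : Conf m r => L x (v t) (w t) t) (q t)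
          (η1, fun ν => ∑ i, a ν i (q t) t * η1 i))
        - deriv (fun s =>
            fderiv ℝ (fun v : (Fin m → ℝ) × (Fin r → ℝ) => L (q s) v.1 v.2 s)
              (v s, w s)
              (η1, fun ν => ∑ i, a ν i (q t) t * η1 i)) t
        + ((∑ i, Fb (q t) (v t) (w t) t i * η1 i)
            + ∑ ν, Ff (q t) (v t) (w t) t ν
              * (∑ i, a ν i (q t) t * η1 i)) := by
    intro t
    let A : (Fin m → ℝ) →ₗ[ℝ] (Fin r → ℝ) :=
      Matrix.mulVecLin (Matrix.of fun ν i => a ν i (q t) t)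
    let B : (Fin m → ℝ) →ₗ[ℝ] ℝ := Fintype.linearCombination ℝ (Fb (q t) (v t) (w t) t)
    let C : (Fin r → ℝ) →ₗ[ℝ] ℝ := Fintype.linearCombination ℝ (Ff (q t) (v t) (w t) t)
    let D := (fderiv ℝ (fun x : Conf m r => L x (v t) (w t) t) (q t)).toLinearMap
    let Q : Ph m r →ₗ[ℝ] ℝ := (P' t).toLinearMap
    refine ⟨D ∘ₗ (LinearMap.id.prod A)
      - Q ∘ₗ (LinearMap.prod 0 (LinearMap.prod LinearMap.id (LinearMap.prod A 0)))
      + (B + C ∘ₗ A), fun η => ?_⟩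
    rw [hdA]
    have hA : A η = fun ν => ∑ i, a ν i (q t) t * η i := by
      ext ν
      simp [A, Matrix.mulVec, dotProduct]
    simp [hA, D, Q, B, C, Fintype.linearCombination_apply, mul_comm]
  have main : ∀ t i, 
      ((fderiv ℝ (fun x : Conf m r => L x (v t) (w t) t) (q t)
          (Pi.single i 1, fun ν => ∑ j, a ν j (q t) t * (Pi.single i 1 : Fin m → ℝ) j))
        - deriv (fun s =>
            fderiv ℝ (fun v : (Fin m → ℝ) × (Fin r → ℝ) => L (q s) v.1 v.2 s)
              (v s, w s)
              (Pi.single i 1, fun ν => ∑ j, a ν j (q t) t * (Pi.single i 1 : Fin m → ℝ) j)) t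
        + ((∑ j, Fb (q t) (v t) (w t) t j * (Pi.single i 1 : Fin m → ℝ) j)
            + ∑ ν, Ff (q t) (v t) (w t) t ν
              * (∑ j, a ν j (q t) t * (Pi.single i 1 : Fin m → ℝ) j))) =
      (fderiv ℝ (fun y => constrLag L a a0 (y, (q t).2) (v t) t)
          (q t).1 (Pi.single i 1)
        + Fb (q t) (v t) (w t) t i
        + (∑ ν, a ν i (q t) t *
            (fderiv ℝ
              (fun w => constrLag L a a0 ((q t).1, w) (v t) t)
              (q t).2 (Pi.single ν 1)
             + Ff (q t) (v t) (w t) t ν))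
        + ∑ ν, coeffK L a a0 ν (q t) (v t) t *
            ((∑ j, coeffA a ν i j (q t) t * v t j)
              + coeffA0 a a0 ν i (q t) t)) -
      deriv (fun s =>
        fderiv ℝ (fun v => constrLag L a a0 (q s) v s) (v s) (Pi.single i 1)) t := by
    intro t i
    have e1 : ∀ ν, ∑ j, a ν j (q t) t * (Pi.single i 1 : Fin m → ℝ) j = a ν i (q t) t := by
      intro ν; simp [Pi.single_apply]
    have e2 : ∑ j, Fb (q t) (v t) (w t) t j * (Pi.single i 1 : Fin m → ℝ) j
        = Fb (q t) (v t) (w t) t i := by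
      simp [Pi.single_apply]
    rw [hdA, hVor, L_conf L hGd]
    simp only [e1, e2]
    have c1 := constrLag_conf L hGd a a0 had ha0d (fun y : Fin m → ℝ => (y, (q t).2))
      ((ContinuousLinearMap.id ℝ _).prod 0) (q t).1
      ((hasFDerivAt_id _).prodMk (hasFDerivAt_const _ _)) (v t) t (Pi.single i 1)
    have c2 := fun ν => constrLag_conf L hGd a a0 had ha0d (fun y : Fin r → ℝ => ((q t).1, y))
      ((0 : (Fin r → ℝ) →L[ℝ] (Fin m → ℝ)).prod (ContinuousLinearMap.id ℝ _)) (q t).2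
      ((hasFDerivAt_const _ _).prodMk (hasFDerivAt_id _)) (v t) t (Pi.single ν 1)
    simp only [Prod.mk.eta, ← hadm t, ContinuousLinearMap.prod_apply,
      ContinuousLinearMap.id_apply, zero_apply] at c1 c2
    rw [c1]
    simp only [c2, coeffK_eq L hGd, ← hadm t]
    rw [fiber_expand (P' t)]
    have lq : fderiv ℝ (unL L) (q t, v t, w t, t) ((Pi.single i 1, fun ν => a ν i (q t) t), 0, 0, 0)
        = fderiv ℝ (unL L) (q t, v t, w t, t) ((Pi.single i 1, 0), 0, 0, 0)
        + ∑ ν, a ν i (q t) t *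
          fderiv ℝ (unL L) (q t, v t, w t, t) ((0, Pi.single ν 1), 0, 0, 0) := by
      have := conf_expand ((fderiv ℝ (unL L) (q t, v t, w t, t)).comp
        ((ContinuousLinearMap.fst ℝ (Conf m r) ℝ).prod 0))
        (Pi.single i 1) (fun ν => a ν i (q t) t) 0
      simp only [ContinuousLinearMap.comp_apply, ContinuousLinearMap.prod_apply,
        ContinuousLinearMap.coe_fst', zero_apply, zero_mul, add_zero] at this
      rw [Finset.sum_eq_single i (by intro j _ hj; simp [hj]) (by simp)] at this
      simpa only [Pi.single_eq_same, one_mul, Prod.mk_zero_zero] using this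
    rw [lq]
    generalize fderiv ℝ (unL L) (q t, v t, w t, t) = P
    have cA : ∀ ν, (∑ j, coeffA a ν i j (q t) t * v t j) + coeffA0 a a0 ν i (q t) t
        = fderiv ℝ (un (a ν i)) (q t, t) ((v t, w t), 1)
          - ((∑ j, fderiv ℝ (un (a ν j)) (q t, t) ((Pi.single i 1, 0), 0) * v t j)
            + fderiv ℝ (un (a0 ν)) (q t, t) ((Pi.single i 1, 0), 0))
          - ∑ μ, a μ i (q t) t *
            ((∑ j, fderiv ℝ (un (a ν j)) (q t, t) ((0, Pi.single μ 1), 0) * v t j)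
            + fderiv ℝ (un (a0 ν)) (q t, t) ((0, Pi.single μ 1), 0)) := by
      intro ν
      rw [conf_expand]
      simp only [coeffA, coeffA0, pdBase_eq _ (had _ _), pdFib_eq _ (had _ _),
        pdBase_eq _ (ha0d _), pdFib_eq _ (ha0d _), pdT_eq _ (had _ _), hadm t, constrVel]
      simp only [add_mul, sub_mul, mul_add, Finset.sum_add_distrib, Finset.sum_sub_distrib,
        Finset.sum_mul, Finset.mul_sum]
      rw [Finset.sum_comm (γ := Fin r) (α := Fin m)]
      rw [Finset.sum_comm (s := (Finset.univ : Finset (Fin m))) (t := (Finset.univ : Finset (Fin r)))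
        (f := fun j μ => a μ i (q t) t * (fderiv ℝ (un (a ν j)) (q t, t)) ((0, Pi.single μ 1), 0) * v t j)]
      simp only [mul_assoc, mul_comm, mul_left_comm]
      ring1
    simp only [cA]
    simp only [mul_sub, mul_add (a _ _ _ _), Finset.sum_add_distrib, Finset.sum_sub_distrib]
    have sw : ∑ ν, P (0, 0, Pi.single ν 1, 0) * ∑ μ, (a μ i (q t) t *
            (∑ j, fderiv ℝ (un (a ν j)) (q t, t) ((0, Pi.single μ 1), 0) * v t j)
            + a μ i (q t) t * fderiv ℝ (un (a0 ν)) (q t, t) ((0, Pi.single μ 1), 0))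
        = ∑ μ, a μ i (q t) t * ∑ ν,
          ((∑ j, fderiv ℝ (un (a ν j)) (q t, t) ((0, Pi.single μ 1), 0) * v t j)
            + fderiv ℝ (un (a0 ν)) (q t, t) ((0, Pi.single μ 1), 0))
            * P (0, 0, Pi.single ν 1, 0) := by
      simp only [Finset.mul_sum]
      rw [Finset.sum_comm]
      refine Finset.sum_congr rfl fun μ _ => Finset.sum_congr rfl fun ν _ => ?_
      rw [← Finset.mul_sum]
      ring
    simp only [Finset.sum_add_distrib] at sw
    rw [sw]
    simp only [mul_comm (P _)]
    simp only [mul_comm (Ff _ _ _ _ _)]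
    ring1
  constructor
  · intro H t i
    have := H t (Pi.single i 1)
    rw [main] at this
    linarith
  · intro H t η
    obtain ⟨ℓ, hℓ⟩ := key t
    rw [← hℓ, lin_expand]
    refine Finset.sum_eq_zero fun i _ => ?_
    rw [hℓ, main, H t i]
    simp

end Voronec
end

section
/- (One-dimensional Chaplygin-type Hamiltonization.) Let K, B : ℝ → ℝ be smooth with K(t) > 0, let V : ℝ × ℝ → ℝ be smooth, and set f(t) := −B(t)/K(t). Fix t₀ ∈ ℝ, τ₀ ∈ ℝ, 𝒩₀ > 0, and define u(t) := τ₀ + ∫_{t₀}^t 𝒩₀ exp(∫_{t₀}^s f(σ)dσ) ds. Then u is a strictly increasing smooth map from ℝ onto an open interval (τ₁,τ₂); let z := u^{-1} : (τ₁,τ₂) → ℝ and 𝒩(τ) := u'(z(τ)) = 1/z'(τ). For any twice differentiable y : ℝ → ℝ, y satisfies the equation K(t) ÿ + K̇(t) ẏ = −(∂V/∂y)(y(t),t) + B(t) ẏ for all t ∈ ℝ if and only if Y(τ) := y(z(τ)) satisfies the Euler–Lagrange equation (d/dτ)(K(z(τ)) 𝒩(τ)² Y'(τ)) = −(∂V/∂y)(Y(τ),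 z(τ)) for all τ ∈ (τ₁,τ₂). -/
open scoped ContDiff

lemma chap_contDiff_of_hasDerivAt {F f : ℝ → ℝ} (h : ∀ t, HasDerivAt F (f t) t)
    (hf : ContDiff ℝ ∞ f) : ContDiff ℝ ∞ F := by
  rw [contDiff_infty_iff_deriv]
  refine ⟨fun t => (h t).differentiableAt, ?_⟩
  have : deriv F = f := funext fun t => (h t).deriv
  rw [this]; exact hf

lemma chap_hasDerivAt_integral {f : ℝ → ℝ} (hf : Continuous f) (a t : ℝ) :
    HasDerivAt (fun s => ∫ x in a..s, f x) (f t) t :=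
  intervalIntegral.integral_hasDerivAt_right (hf.intervalIntegrable _ _)
    (hf.stronglyMeasurableAtFilter _ _) hf.continuousAt

/-- One-dimensional Chaplygin-type Hamiltonization.  For the one-dimensional Lagrangian
system `L(y,ẏ,t) = ½K(t)ẏ² − V(y,t)` with non-potential force `F = B(t)ẏ dy`, the time
reparametrization `t = z(τ)` built from `u(t) = τ₀ + ∫_{t₀}^t 𝒩₀ exp(∫_{t₀}^s f(σ)dσ) ds`
(`f = −B/K`, `z = u⁻¹`, `𝒩(τ) = u'(z(τ))`) turns the equation of motion into the
Euler–Lagrange equation of `L*(y,y',τ) = ½K(z(τ))(𝒩(τ)y')² − V(y,z(τ))`.  Moreover `u`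
is a strictly increasing smooth map from `ℝ` onto an open interval. -/
theorem one_dimensional_chaplygin_hamiltonization
    (K B : ℝ → ℝ) (hK : ContDiff ℝ ∞ K) (hB : ContDiff ℝ ∞ B)
    (hKpos : ∀ t, 0 < K t)
    (V : ℝ → ℝ → ℝ) (hV : ContDiff ℝ ∞ (fun p : ℝ × ℝ => V p.1 p.2))
    (t₀ τ₀ N₀ : ℝ) (hN₀ : 0 < N₀)
    (u : ℝ → ℝ)
    (hu : ∀ t, u t = τ₀ + ∫ s in t₀..t, N₀ * Real.exp (∫ σ in t₀..s, -B σ / K σ))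
    (z : ℝ → ℝ) (hz : ∀ t, z (u t) = t)
    (N : ℝ → ℝ) (hN : ∀ τ, N τ = deriv u (z τ)) :
    -- `u` is smooth, strictly increasing, and its range is an open interval `(τ₁,τ₂)`
    ContDiff ℝ ∞ u ∧ StrictMono u ∧ IsOpen (Set.range u) ∧ (Set.range u).OrdConnected ∧
    -- the equivalence of the two equations of motion
    (∀ y : ℝ → ℝ, Differentiable ℝ y → Differentiable ℝ (deriv y) →
      ((∀ t, K t * deriv (deriv y) t + deriv K t * deriv y t
          = -(deriv (fun p => V p t) (y t)) + B t * deriv y t)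
        ↔
       (∀ τ ∈ Set.range u,
          deriv (fun σ => K (z σ) * (N σ) ^ 2 * deriv (fun σ' => y (z σ')) σ) τ
            = -(deriv (fun p => V p (z τ)) (y (z τ)))))) := by
  have hf : ContDiff ℝ ∞ (fun σ => -B σ / K σ) := hB.neg.div hK (fun t => (hKpos t).ne')
  have hF : ∀ t, HasDerivAt (fun s => ∫ σ in t₀..s, -B σ / K σ) (-B t / K t) t :=
    chap_hasDerivAt_integral hf.continuous t₀
  have hFs := chap_contDiff_of_hasDerivAt hF hf
  obtain ⟨w, hw⟩ : ∃ w : ℝ → ℝ, w = fun s => N₀ * Real.exp (∫ σ in t₀..s, -B σ / K σ) :=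
    ⟨_, rfl⟩
  have hws : ContDiff ℝ ∞ w := by
    rw [hw]; exact contDiff_const.mul hFs.exp
  have hwpos : ∀ t, 0 < w t := fun t => by rw [hw]; positivity
  have hwd : ∀ t, HasDerivAt w (w t * (-B t / K t)) t := fun t => by
    rw [hw]
    exact ((hF t).exp.const_mul N₀).congr_deriv (by ring)
  have hud : ∀ t, HasDerivAt u (w t) t := fun t => by
    have h1 : u = fun t => τ₀ + ∫ s in t₀..t, w s := by
      funext t; rw [hu t, hw]
    rw [h1]
    exact (chap_hasDerivAt_integral hws.continuous t₀ t).const_add τ₀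
  have hus : ContDiff ℝ ∞ u := chap_contDiff_of_hasDerivAt hud hws
  have hstrict : ∀ t, HasStrictDerivAt u (w t) t := fun t =>
    hus.contDiffAt.hasStrictDerivAt' (hud t) (by simp)
  have hmono : StrictMono u := strictMono_of_deriv_pos fun t => by
    rw [(hud t).deriv]; exact hwpos t
  have hopen : IsOpen (Set.range u) :=
    (isOpenMap_of_hasStrictDerivAt hstrict fun t => (hwpos t).ne').isOpen_range
  refine ⟨hus, hmono, hopen, (isPreconnected_range hus.continuous).ordConnected, ?_⟩
  intro y hy hy'
  have hzd : ∀ t, HasDerivAt z (w t)⁻¹ (u t) := fun t =>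
    ((hstrict t).to_local_left_inverse (hwpos t).ne'
      (Filter.Eventually.of_forall hz)).hasDerivAt
  have hY : ∀ t, deriv (fun σ' => y (z σ')) (u t) = deriv y t * (w t)⁻¹ := fun t => by
    have h1 : HasDerivAt y (deriv y t) (z (u t)) := by
      rw [hz]; exact (hy t).hasDerivAt
    exact (h1.comp (u t) (hzd t)).deriv
  have key : ∀ t, deriv (fun σ => K (z σ) * (N σ) ^ 2 * deriv (fun σ' => y (z σ')) σ) (u t)
      = K t * deriv (deriv y) t + deriv K t * deriv y t - B t * deriv y t := fun t => by
    have hev : (fun σ => K (z σ) * (N σ) ^ 2 * deriv (fun σ' => y (z σ')) σ)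
        =ᶠ[nhds (u t)] ((fun s => K s * w s * deriv y s) ∘ z) := by
      filter_upwards [hopen.mem_nhds (Set.mem_range_self t)] with σ hσ
      obtain ⟨s, rfl⟩ := hσ
      have := (hwpos s).ne'
      simp only [Function.comp, hN, hY, hz, (hud s).deriv]
      field_simp
    rw [hev.deriv_eq]
    have hKd : HasDerivAt K (deriv K t) t :=
      ((hK.differentiable (by simp)) t).hasDerivAt
    have h1 := (hKd.mul (hwd t)).mul (hy' t).hasDerivAt
    have h2 : HasDerivAt (fun s => K s * w s * deriv y s)
        ((deriv K t * w t + K t * (w t * (-B t / K t))) * deriv y t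
          + K t * w t * deriv (deriv y) t) (z (u t)) := by
      rw [hz]; exact h1
    rw [(h2.comp (u t) (hzd t)).deriv]
    have := (hwpos t).ne'
    have := (hKpos t).ne'
    field_simp
    ring
  constructor
  · rintro h _ ⟨t, rfl⟩
    rw [key, hz]
    linarith [h t]
  · intro h t
    have := h (u t) (Set.mem_range_self t)
    rw [key, hz] at this
    linarith
end

section
/- (Hamiltonization of the rolling disc over a circle of variable radius.) Let m, r, I, g > 0, let a : ℝ → ℝ be smooth with 0 < a(t) < a_max for all t, and set α := I/(mr²+I). Let u(t) := ∫₀^t a(s)^{-α} ds, let z : ℝ → ℝ be the inverse of u, and 𝒩(τ) := a(z(τ))^{-α} = 1/z'(τ). Then a twice differentiable curve φ : ℝ → ℝ satisfies the reduced equation (mr²+I)a(t)²φ̈ + 2(mr²+I)a(t)ȧ(t)φ̇ = −mrg a(t) cos φ + I a(t)ȧ(t) φ̇ for all t if and only if Φ(τ) := φ(z(τ)) satisfies the Euler–Lagrange equation (d/dτ)((mr²+I) a(z(τ))² 𝒩(τ)² Φ'(τ)) = −mrg a(z(τ)) cos Φ(τ) for all τ, i.e. Φ solves the Lagrangian system with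 Lagrangian L*_c(φ,φ',τ) = ½(mr²+I)a(z(τ))²(𝒩(τ)φ')² − mrg a(z(τ)) sin φ. -/
open scoped ContDiff

/-- Hamiltonization of the rolling of a balanced disc of radius `r`, mass `m` and moment
of inertia `I` over a vertical circle of variable radius, `a(t) = (R(t)+r)/r`.  With
`α = I/(mr²+I)`, `u(t) = ∫₀^t a(s)^{-α} ds`, `z = u⁻¹` and `𝒩(τ) = a(z(τ))^{-α}`, a curve
`φ` satisfies the reduced equation
`(mr²+I)a²φ̈ + 2(mr²+I)aȧφ̇ = −mrg a cos φ + Iaȧφ̇`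
if and only if `Φ(τ) = φ(z(τ))` satisfies the Euler–Lagrange equation
`(d/dτ)((mr²+I)a(z(τ))²𝒩(τ)²Φ') = −mrg a(z(τ)) cos Φ` of the Lagrangian
`L*_c = ½(mr²+I)a(z(τ))²(𝒩(τ)φ')² − mrg a(z(τ)) sin φ`. -/
theorem rolling_disc_hamiltonization
    (m r I g amax : ℝ) (hm : 0 < m) (hr : 0 < r) (hI : 0 < I) (hg : 0 < g)
    (a : ℝ → ℝ) (ha : ContDiff ℝ ∞ a) (hbound : ∀ t, 0 < a t ∧ a t < amax)
    (α : ℝ) (hα : α = I / (m * r ^ 2 + I))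
    (u : ℝ → ℝ) (hu : ∀ t, u t = ∫ s in (0 : ℝ)..t, a s ^ (-α))
    (z : ℝ → ℝ) (hz1 : ∀ t, z (u t) = t) (hz2 : ∀ τ, u (z τ) = τ)
    (φ : ℝ → ℝ) (hφ1 : Differentiable ℝ φ) (hφ2 : Differentiable ℝ (deriv φ)) :
    (∀ t, (m * r ^ 2 + I) * a t ^ 2 * deriv (deriv φ) t
        + 2 * (m * r ^ 2 + I) * a t * deriv a t * deriv φ t
      = -(m * r * g * a t * Real.cos (φ t)) + I * a t * deriv a t * deriv φ t)
    ↔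
    (∀ τ, deriv (fun σ =>
          (m * r ^ 2 + I) * a (z σ) ^ 2 * (a (z σ) ^ (-α)) ^ 2
            * deriv (fun σ' => φ (z σ')) σ) τ
        = -(m * r * g * a (z τ) * Real.cos (φ (z τ)))) := by
  have hM : 0 < m * r ^ 2 + I := by positivity
  have hMα : (m * r ^ 2 + I) * α = I := by rw [hα]; field_simp
  have hpos : ∀ t, 0 < a t := fun t => (hbound t).1
  have hcont : Continuous (fun s => a s ^ (-α)) :=
    ha.continuous.rpow_const (fun x => Or.inl (hpos x).ne')
  have hud : ∀ t, HasDerivAt u (a t ^ (-α)) t := by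
    intro t
    rw [show u = fun t => ∫ s in (0 : ℝ)..t, a s ^ (-α) from funext hu]
    exact intervalIntegral.integral_hasDerivAt_right (hcont.intervalIntegrable _ _)
      (hcont.stronglyMeasurableAtFilter _ _) hcont.continuousAt
  have hmono : StrictMono u := strictMono_of_hasDerivAt_pos hud
    (fun t => Real.rpow_pos_of_pos (hpos t) _)
  have hzc : Continuous z := (hmono.orderIsoOfRightInverse u z hz2).symm.continuous
  have hzd : ∀ τ, HasDerivAt z (a (z τ) ^ (-α))⁻¹ τ := fun τ =>
    HasDerivAt.of_local_left_inverse hzc.continuousAt (hud (z τ))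
      (Real.rpow_pos_of_pos (hpos _) _).ne' (Filter.Eventually.of_forall hz2)
  have hΦ : ∀ σ, deriv (fun σ' => φ (z σ')) σ = deriv φ (z σ) * (a (z σ) ^ (-α))⁻¹ :=
    fun σ => ((hφ1 (z σ)).hasDerivAt.comp σ (hzd σ)).deriv
  have hfun : (fun σ => (m * r ^ 2 + I) * a (z σ) ^ 2 * (a (z σ) ^ (-α)) ^ 2
            * deriv (fun σ' => φ (z σ')) σ)
      = (fun t => (m * r ^ 2 + I) * (a t ^ 2 * a t ^ (-α) * deriv φ t)) ∘ z := by
    funext σ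
    have := (Real.rpow_pos_of_pos (hpos (z σ)) (-α)).ne'
    simp only [hΦ, Function.comp]
    field_simp
  have had : ∀ t, HasDerivAt a (deriv a t) t := fun t =>
    (ha.differentiable (by simp) t).hasDerivAt
  have key : ∀ τ, deriv (fun σ => (m * r ^ 2 + I) * a (z σ) ^ 2 * (a (z σ) ^ (-α)) ^ 2
            * deriv (fun σ' => φ (z σ')) σ) τ
      = (m * r ^ 2 + I) * a (z τ) ^ 2 * deriv (deriv φ) (z τ)
        + 2 * (m * r ^ 2 + I) * a (z τ) * deriv a (z τ) * deriv φ (z τ)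
        - I * a (z τ) * deriv a (z τ) * deriv φ (z τ) := by
    intro τ
    rw [hfun]
    have hN := (Real.rpow_pos_of_pos (hpos (z τ)) (-α)).ne'
    have h1 := ((((had (z τ)).pow 2).mul
      ((had (z τ)).rpow_const (p := -α) (Or.inl (hpos (z τ)).ne'))).mul
      (hφ2 (z τ)).hasDerivAt).const_mul (m * r ^ 2 + I)
    have h2 := (HasDerivAt.comp τ h1 (hzd τ)).deriv
    refine Eq.trans h2 ?_
    have ha0 := (hpos (z τ)).ne'
    simp only [Pi.mul_apply, Pi.pow_apply]
    rw [Real.rpow_sub_one ha0]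
    generalize a (z τ) ^ (-α) = N at hN
    trans (m * r ^ 2 + I) * a (z τ) ^ 2 * deriv (deriv φ) (z τ)
        + 2 * (m * r ^ 2 + I) * a (z τ) * deriv a (z τ) * deriv φ (z τ)
        - ((m * r ^ 2 + I) * α) * a (z τ) * deriv a (z τ) * deriv φ (z τ)
    · generalize m * r ^ 2 + I = M
      push_cast
      field_simp
      ring
    · rw [hMα]
  constructor
  · intro h τ
    rw [key]
    linarith [h (z τ)]
  · intro h t
    have := h (u t)
    rw [key, hz1] at this
    linarith
end

section
/- (Reduced equation for the rolling disc via the d'Alembert principle.) Let m, r, I, g > 0 and let a : ℝ → ℝ be smooth with a(t) > 0. Consider on ℝ²{φ,ψ} the Lagrangian L(φ,ψ,φ̇,ψ̇,t) = ½(m r² a(t)² φ̇² + I ψ̇²) − m g r a(t) sin φ with the affine constraint ψ̇ = a(t)φ̇ and virtual displacements 𝒟_t = {(η_φ,η_ψ) : η_ψ = a(t)η_φ}. Then a twice-differentiable admissible curve (φ(t),ψ(t)) with ψ̇(t) = a(t)φ̇(t) satisfies the d'Alembert principle (∂L/∂φ − (d/dt)(∂L/∂φ̇))η_φ + (∂L/∂ψ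 − (d/dt)(∂L/∂ψ̇))η_ψ = 0 for all (η_φ,η_ψ) ∈ 𝒟_t if and only if φ satisfies (mr²+I)a(t)²φ̈ + 2(mr²+I)a(t)ȧ(t)φ̇ = −mrg a(t) cos φ + I a(t)ȧ(t)φ̇ for all t. -/
open scoped ContDiff

/-- The Lagrangian of the balanced disc rolling over a vertical circle of variable radius,
`L(φ,ψ,φ̇,ψ̇,t) = ½(mr²a(t)²φ̇² + Iψ̇²) − mgr a(t) sin φ`, where `a(t) = (R(t)+r)/r`. -/
noncomputable def discLag (m r I g : ℝ) (a : ℝ → ℝ) (p q v w t : ℝ) : ℝ :=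
  (1 / 2) * (m * r ^ 2 * a t ^ 2 * v ^ 2 + I * w ^ 2) - m * g * r * a t * Real.sin p

/-- Reduced equation for the rolling disc via the d'Alembert principle: an admissible
curve `(φ(t), ψ(t))` (with `ψ̇ = a(t)φ̇`) satisfies
`(∂L/∂φ − (d/dt)(∂L/∂φ̇))η_φ + (∂L/∂ψ − (d/dt)(∂L/∂ψ̇))η_ψ = 0` for all virtual
displacements `η_ψ = a(t)η_φ` if and only if `φ` satisfies the reduced equation
`(mr²+I)a²φ̈ + 2(mr²+I)aȧφ̇ = −mrg a cos φ + Iaȧφ̇`. -/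
theorem rolling_disc_dalembert_iff_reduced_equation
    (m r I g : ℝ) (hm : 0 < m) (hr : 0 < r) (hI : 0 < I) (hg : 0 < g)
    (a : ℝ → ℝ) (ha : ContDiff ℝ ∞ a) (hapos : ∀ t, 0 < a t)
    (φ ψ : ℝ → ℝ)
    (hφ1 : Differentiable ℝ φ) (hφ2 : Differentiable ℝ (deriv φ))
    (hψ1 : Differentiable ℝ ψ) (hψ2 : Differentiable ℝ (deriv ψ))
    -- the curve is admissible: `ψ̇ = a(t) φ̇`
    (hadm : ∀ t, deriv ψ t = a t * deriv φ t) :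
    (∀ t, ∀ ηφ ηψ : ℝ, ηψ = a t * ηφ →
      (deriv (fun p => discLag m r I g a p (ψ t) (deriv φ t) (deriv ψ t) t) (φ t)
        - deriv (fun s =>
            deriv (fun v => discLag m r I g a (φ s) (ψ s) v (deriv ψ s) s)
              (deriv φ s)) t) * ηφ
      + (deriv (fun q => discLag m r I g a (φ t) q (deriv φ t) (deriv ψ t) t) (ψ t)
        - deriv (fun s =>
            deriv (fun w => discLag m r I g a (φ s) (ψ s) (deriv φ s) w s)
              (deriv ψ s)) t) * ηψ = 0)
    ↔
    (∀ t, (m * r ^ 2 + I) * a t ^ 2 * deriv (deriv φ) t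
        + 2 * (m * r ^ 2 + I) * a t * deriv a t * deriv φ t
      = -(m * r * g * a t * Real.cos (φ t)) + I * a t * deriv a t * deriv φ t) := by
  have hda : Differentiable ℝ a := ha.differentiable (by simp)
  have h1 : ∀ t, deriv (fun p => discLag m r I g a p (ψ t) (deriv φ t) (deriv ψ t) t) (φ t)
      = -(m * g * r * a t * Real.cos (φ t)) := by
    intro t
    unfold discLag
    exact (((Real.hasDerivAt_sin (φ t)).const_mul (m * g * r * a t)).const_sub _).deriv
  have h2 : ∀ s, deriv (fun v => discLag m r I g a (φ s) (ψ s) v (deriv ψ s) s) (deriv φ s)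
      = m * r ^ 2 * (a s ^ 2 * deriv φ s) := by
    intro s
    unfold discLag
    have h := (((((hasDerivAt_id (deriv φ s)).pow 2).const_mul
      (m * r ^ 2 * a s ^ 2)).add_const (I * deriv ψ s ^ 2)).const_mul (1 / 2 : ℝ)).sub_const
        (m * g * r * a s * Real.sin (φ s))
    refine (HasDerivAt.congr_deriv h ?_).deriv
    simp
    ring
  have h3 : ∀ t, deriv (fun q => discLag m r I g a (φ t) q (deriv φ t) (deriv ψ t) t) (ψ t)
      = 0 := by
    intro t
    unfold discLag
    simp
  have h4 : ∀ s, deriv (fun w => discLag m r I g a (φ s) (ψ s) (deriv φ s) w s) (deriv ψ s)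
      = I * (a s * deriv φ s) := by
    intro s
    unfold discLag
    have h := (((((hasDerivAt_id (deriv ψ s)).pow 2).const_mul I).const_add
      (m * r ^ 2 * a s ^ 2 * deriv φ s ^ 2)).const_mul (1 / 2 : ℝ)).sub_const
        (m * g * r * a s * Real.sin (φ s))
    refine (HasDerivAt.congr_deriv h ?_).deriv
    rw [← hadm s]
    simp
    ring
  have h5 : ∀ t, deriv (fun s => m * r ^ 2 * (a s ^ 2 * deriv φ s)) t
      = m * r ^ 2 * (2 * a t * deriv a t * deriv φ t + a t ^ 2 * deriv (deriv φ) t) := by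
    intro t
    have h := ((((hda t).hasDerivAt.pow 2).mul (hφ2 t).hasDerivAt).const_mul (m * r ^ 2))
    refine (HasDerivAt.congr_deriv h ?_).deriv
    simp
  have h6 : ∀ t, deriv (fun s => I * (a s * deriv φ s)) t
      = I * (deriv a t * deriv φ t + a t * deriv (deriv φ) t) := by
    intro t
    exact (((hda t).hasDerivAt.mul (hφ2 t).hasDerivAt).const_mul I).deriv
  simp only [h1, h2, h3, h4, h5, h6]
  constructor
  · intro h t
    have := h t 1 (a t) (by ring)
    linear_combination -this
  · intro h t x y hxy
    subst hxy
    linear_combination (-x) * h t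
end
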